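/- arXiv:1109.5199 — 3 statements merged into one kernel-verified Lean document; each statement's English description precedes it below -/
import Mathlib

section
/- Suppose 1/s₁ + 1/s₂ = 1 and set k₁(a) = ⌊2k(a)/3⌋. Then lim_{a→0⁺} a²·(s₁+pa)^{k₁(a)} = 0. -/
open MeasureTheory Filter Topology

/-- The W-like map `W_a` with parameters `s₁ s₂ p q r` and perturbation `a`. -/
noncomputable def Wmap (s₁ s₂ p q r a : ℝ) (x : ℝ) : ℝ :=
  if x < 1/2 - (1/2 + r*a)/(s₁ + p*a) then
    1 - (2*(s₁ + p*a)/(s₁ - 1 + p*a - 2*r*a)) * x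
  else if x < 1/2 then
    (s₁ + p*a)*(x - 1/2) + 1/2 + r*a
  else if x < 1/2 + (1/2 + r*a)/(s₂ + q*a) then
    -(s₂ + q*a)*(x - 1/2) + 1/2 + r*a
  else
    1 + (2*(s₂ + q*a)/(s₂ - 1 + q*a - 2*r*a)) * (x - 1)

/-- `k(a)`: the first iterate `j ≥ 1` at which the trajectory of `1/2` under `W_a`
drops below `1/2 − (1/2+ra)/(s₁+pa)`. -/
noncomputable def kIndex (s₁ s₂ p q r a : ℝ) : ℕ :=
  sInf {j : ℕ | 1 ≤ j ∧
    (Wmap s₁ s₂ p q r a)^[j] (1/2) ≤ 1/2 - (1/2 + r*a)/(s₁ + p*a)}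

/-- `k₁(a) = ⌊2k(a)/3⌋`, the integer part of `2k(a)/3`. -/
noncomputable def kIndex1 (s₁ s₂ p q r a : ℝ) : ℕ :=
  2 * kIndex s₁ s₂ p q r a / 3

/-!
Write `S = s₁ + p a`, `R = s₂ + q a` and let `z = 1/2 - r a / (S - 1)` be the fixed point of the
increasing branch of `W_a`. The second iterate of `1/2` lies below `z` by
`r a ((S - 1) (R - 1) - 1) / (S - 1)`. When `1/s₁ + 1/s₂ = 1` the zeroth-order term
`(s₁ - 1) (s₂ - 1) - 1` vanishes, so this distance is of exact order `a²`. Until time `k` the orbit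
stays on the increasing branch, where the distance to `z` is multiplied by `S` at each step and
remains bounded. Hence `a² S ^ k = O(1)`, and `(a² S ^ k₁) ^ 3 ≤ a² (a² S ^ k) ^ 2 → 0`.
-/

lemma mul_pow_pow_le_pow_sub_mul {x S : ℝ} {c d m n : ℕ} (hx : 0 ≤ x) (hS : 1 ≤ S)
    (hcd : c ≤ d) (hmn : d * m ≤ c * n) :
    (x * S ^ m) ^ d ≤ x ^ (d - c) * (x * S ^ n) ^ c :=
  calc (x * S ^ m) ^ d = x ^ d * S ^ (d * m) := by rw [mul_pow, ← pow_mul, mul_comm m d]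
    _ ≤ x ^ d * S ^ (c * n) := by gcongr
    _ = x ^ (d - c) * (x * S ^ n) ^ c := by
      rw [mul_pow, ← pow_mul, mul_comm n c, ← mul_assoc, pow_sub_mul_pow x hcd]

lemma tendsto_mul_pow_zero_of_mul_pow_le {ι : Type*} {l : Filter ι} {x S : ι → ℝ} {m n : ι → ℕ}
    {c d : ℕ} {C : ℝ} (hx : Tendsto x l (𝓝 0)) (hx_nonneg : ∀ᶠ i in l, 0 ≤ x i)
    (hS : ∀ᶠ i in l, 1 ≤ S i) (hC : ∀ᶠ i in l, x i * S i ^ n i ≤ C)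
    (hcd : c < d) (hmn : ∀ i, d * m i ≤ c * n i) :
    Tendsto (fun i => x i * S i ^ m i) l (𝓝 0) := by
  have bound_tendsto : Tendsto (fun i => x i ^ (d - c) * C ^ c) l (𝓝 0) := by
    simpa [Nat.sub_ne_zero_of_lt hcd] using (hx.pow (d - c)).mul_const (C ^ c)
  have pow_tendsto : Tendsto (fun i => (x i * S i ^ m i) ^ d) l (𝓝 0) := by
    refine squeeze_zero' ?_ ?_ bound_tendsto
    · filter_upwards [hx_nonneg, hS] with i hxi hSi
      positivity
    · filter_upwards [hx_nonneg, hS, hC] with i hxi hSi hCi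
      calc (x i * S i ^ m i) ^ d ≤ x i ^ (d - c) * (x i * S i ^ n i) ^ c :=
            mul_pow_pow_le_pow_sub_mul hxi hSi hcd.le (hmn i)
        _ ≤ x i ^ (d - c) * C ^ c := by gcongr
  rw [← Asymptotics.isLittleO_one_iff ℝ] at pow_tendsto ⊢
  exact Asymptotics.IsLittleO.of_pow (n := d) (by simpa [Pi.pow_def] using pow_tendsto)
    (Nat.ne_zero_of_lt hcd)

/-- The fixed point of the increasing branch `x ↦ (s₁ + p a) (x - 1/2) + 1/2 + r a` of `W_a`, the
reference point for the orbit of `1/2`. At slope `s₁ + p a = 1`, where the branch is a translation,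
the division by zero makes the value `1/2`. -/
noncomputable def WmapFixedPoint (s₁ p r a : ℝ) : ℝ :=
  1 / 2 - r * a / (s₁ + p * a - 1)

section Orbit

variable {s₁ s₂ p q r a x : ℝ}

lemma Wmap_of_mem_increasing (hx : 1 / 2 - (1 / 2 + r * a) / (s₁ + p * a) ≤ x) (hx' : x < 1 / 2) :
    Wmap s₁ s₂ p q r a x = (s₁ + p * a) * (x - 1 / 2) + 1 / 2 + r * a := by
  rw [Wmap, if_neg hx.not_gt, if_pos hx']

lemma Wmap_of_mem_decreasing (hbreak : 0 ≤ (1 / 2 + r * a) / (s₁ + p * a)) (hx : 1 / 2 ≤ x)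
    (hx' : x < 1 / 2 + (1 / 2 + r * a) / (s₂ + q * a)) :
    Wmap s₁ s₂ p q r a x = -(s₂ + q * a) * (x - 1 / 2) + 1 / 2 + r * a := by
  rw [Wmap, if_neg (by linarith), if_neg hx.not_gt, if_pos hx']

lemma WmapFixedPoint_sub_Wmap (hS : s₁ + p * a ≠ 1)
    (hx : 1 / 2 - (1 / 2 + r * a) / (s₁ + p * a) ≤ x) (hx' : x < 1 / 2) :
    WmapFixedPoint s₁ p r a - Wmap s₁ s₂ p q r a x =
      (s₁ + p * a) * (WmapFixedPoint s₁ p r a - x) := by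
  have hS' : s₁ + p * a - 1 ≠ 0 := sub_ne_zero.mpr hS
  rw [Wmap_of_mem_increasing hx hx', WmapFixedPoint]
  generalize s₁ + p * a = S at hS' ⊢
  field_simp
  ring

lemma Wmap_half (hS : 0 < s₁ + p * a) (hR : 0 < s₂ + q * a) (hra : 0 ≤ r * a) :
    Wmap s₁ s₂ p q r a (1 / 2) = 1 / 2 + r * a := by
  rw [Wmap_of_mem_decreasing (by positivity) le_rfl (lt_add_of_pos_right _ (by positivity))]
  ring

lemma Wmap_iterate_two_half (hS : 0 < s₁ + p * a) (hR : 0 < s₂ + q * a) (hra : 0 ≤ r * a)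
    (hsmall : r * a * (s₂ + q * a) < 1 / 2 + r * a) :
    (Wmap s₁ s₂ p q r a)^[2] (1 / 2) = 1 / 2 - r * a * (s₂ + q * a - 1) := by
  have image_lt : r * a < (1 / 2 + r * a) / (s₂ + q * a) := (lt_div_iff₀ hR).mpr hsmall
  rw [Function.iterate_succ_apply', Function.iterate_one, Wmap_half hS hR hra,
    Wmap_of_mem_decreasing (by positivity) (by linarith) (by linarith)]
  ring

lemma WmapFixedPoint_sub_iterate_two_half (hS : 1 < s₁ + p * a) (hR : 0 < s₂ + q * a)
    (hra : 0 ≤ r * a) (hsmall : r * a * (s₂ + q * a) < 1 / 2 + r * a) :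
    WmapFixedPoint s₁ p r a - (Wmap s₁ s₂ p q r a)^[2] (1 / 2) =
      r * a * ((s₁ + p * a - 1) * (s₂ + q * a - 1) - 1) / (s₁ + p * a - 1) := by
  have hS' : s₁ + p * a - 1 ≠ 0 := by linarith
  rw [Wmap_iterate_two_half (by linarith) hR hra hsmall, WmapFixedPoint]
  generalize s₁ + p * a = S at hS' ⊢
  field_simp
  ring

lemma WmapFixedPoint_lt_half (hS : 1 < s₁ + p * a) (hra : 0 < r * a) :
    WmapFixedPoint s₁ p r a < 1 / 2 :=
  sub_lt_self _ (div_pos hra (sub_pos.mpr hS))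

lemma WmapFixedPoint_sub_iterate (hS : 1 < s₁ + p * a) (hra : 0 < r * a)
    (hx : x ≤ WmapFixedPoint s₁ p r a) (j : ℕ)
    (horbit : ∀ i < j, 1 / 2 - (1 / 2 + r * a) / (s₁ + p * a) ≤ (Wmap s₁ s₂ p q r a)^[i] x) :
    WmapFixedPoint s₁ p r a - (Wmap s₁ s₂ p q r a)^[j] x =
      (s₁ + p * a) ^ j * (WmapFixedPoint s₁ p r a - x) := by
  induction j with
  | zero => simp
  | succ j ih =>
    have distance := ih fun i hi => horbit i (hi.trans j.lt_succ_self)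
    have distance_nonneg : 0 ≤ (s₁ + p * a) ^ j * (WmapFixedPoint s₁ p r a - x) :=
      mul_nonneg (by positivity) (sub_nonneg.mpr hx)
    have lt_half : (Wmap s₁ s₂ p q r a)^[j] x < 1 / 2 := by
      linarith [WmapFixedPoint_lt_half hS hra]
    rw [Function.iterate_succ_apply',
      WmapFixedPoint_sub_Wmap hS.ne' (horbit j j.lt_succ_self) lt_half, distance, pow_succ']
    ring

lemma lt_iterate_of_lt_kIndex {i : ℕ} (hi : 1 ≤ i) (hik : i < kIndex s₁ s₂ p q r a) :
    1 / 2 - (1 / 2 + r * a) / (s₁ + p * a) < (Wmap s₁ s₂ p q r a)^[i] (1 / 2) := by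
  by_contra! hle
  exact Nat.notMem_of_lt_sInf hik ⟨hi, hle⟩

lemma pow_mul_WmapFixedPoint_sub_lt_of_kIndex_eq {j : ℕ} (hS : 1 < s₁ + p * a) (hra : 0 < r * a)
    (hbelow : (Wmap s₁ s₂ p q r a)^[2] (1 / 2) ≤ WmapFixedPoint s₁ p r a)
    (hk : kIndex s₁ s₂ p q r a = j + 3) :
    (s₁ + p * a) ^ j * (WmapFixedPoint s₁ p r a - (Wmap s₁ s₂ p q r a)^[2] (1 / 2)) <
      (1 / 2 + r * a) / (s₁ + p * a) := by
  have above_break : ∀ i ≤ j, 1 / 2 - (1 / 2 + r * a) / (s₁ + p * a) <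
      (Wmap s₁ s₂ p q r a)^[i] ((Wmap s₁ s₂ p q r a)^[2] (1 / 2)) := fun i hi => by
    rw [← Function.iterate_add_apply]
    exact lt_iterate_of_lt_kIndex (by omega) (by omega)
  rw [← WmapFixedPoint_sub_iterate hS hra hbelow j fun i hi => (above_break i hi.le).le]
  linarith [above_break j le_rfl, WmapFixedPoint_lt_half hS hra]

lemma mul_pow_kIndex_le (hS : 1 < s₁ + p * a) (hra : 0 < r * a)
    (hgap : 1 ≤ (s₁ + p * a - 1) * (s₂ + q * a - 1))
    (hsmall : r * a * (s₂ + q * a) < 1 / 2 + r * a) :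
    r * a * ((s₁ + p * a - 1) * (s₂ + q * a - 1) - 1) * (s₁ + p * a) ^ kIndex s₁ s₂ p q r a ≤
      (s₁ + p * a) ^ 2 * (s₁ + p * a - 1) * (1 / 2 + r * a) := by
  have hS' : 0 < s₁ + p * a - 1 := sub_pos.mpr hS
  have hR : 0 < s₂ + q * a := by linarith [pos_of_mul_pos_right (one_pos.trans_le hgap) hS'.le]
  have distance := WmapFixedPoint_sub_iterate_two_half hS hR hra.le hsmall
  set S := s₁ + p * a
  set gap := r * a * ((S - 1) * (s₂ + q * a - 1) - 1)
  have gap_nonneg : 0 ≤ gap := mul_nonneg hra.le (sub_nonneg.mpr hgap)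
  rcases le_or_gt (kIndex s₁ s₂ p q r a) 2 with hk | hk
  · have gap_le : gap ≤ (S - 1) * (1 / 2 + r * a) := by
      have := mul_le_mul_of_nonneg_left hsmall.le hS'.le
      have := mul_pos hS' hra
      linarith
    calc gap * S ^ kIndex s₁ s₂ p q r a ≤ (S - 1) * (1 / 2 + r * a) * S ^ 2 := by
          gcongr; exact hS.le
      _ = S ^ 2 * (S - 1) * (1 / 2 + r * a) := by ring
  · obtain ⟨j, hj⟩ := Nat.exists_eq_add_of_le' hk
    have hbelow : (Wmap s₁ s₂ p q r a)^[2] (1 / 2) ≤ WmapFixedPoint s₁ p r a :=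
      sub_nonneg.mp (distance ▸ div_nonneg gap_nonneg hS'.le)
    have hlt := pow_mul_WmapFixedPoint_sub_lt_of_kIndex_eq hS hra hbelow hj
    rw [distance, ← mul_div_assoc, div_lt_div_iff₀ hS' (by linarith)] at hlt
    calc gap * S ^ kIndex s₁ s₂ p q r a = S ^ 2 * (S ^ j * gap * S) := by rw [hj]; ring
      _ ≤ S ^ 2 * ((1 / 2 + r * a) * (S - 1)) := by gcongr
      _ = S ^ 2 * (S - 1) * (1 / 2 + r * a) := by ring

end Orbit

section Asymptotics

variable {s₁ s₂ p q r : ℝ}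

lemma one_le_sub_one_mul_sub_one_of_one_div_add_one_div_le_one (hs₁ : 0 < s₁) (hs₂ : 0 < s₂)
    (hsum : 1 / s₁ + 1 / s₂ ≤ 1) :
    1 ≤ (s₁ - 1) * (s₂ - 1) := by
  rw [div_add_div _ _ hs₁.ne' hs₂.ne', div_le_one (by positivity)] at hsum
  linarith

lemma eventually_one_lt_slope (p : ℝ) (hs₁ : 1 < s₁) : ∀ᶠ a in 𝓝[>] (0 : ℝ), 1 < s₁ + p * a :=
  nhdsWithin_le_nhds <| (Continuous.tendsto' (by fun_prop) 0 s₁ (by simp)).eventually_const_lt hs₁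

lemma eventually_mul_le_slope_gap (hs : 1 ≤ (s₁ - 1) * (s₂ - 1))
    (hpq : 0 < (s₁ - 1) * q + (s₂ - 1) * p) :
    ∀ᶠ a in 𝓝[>] (0 : ℝ), ((s₁ - 1) * q + (s₂ - 1) * p) / 2 * a ≤
      (s₁ + p * a - 1) * (s₂ + q * a - 1) - 1 := by
  have second_order : ∀ᶠ a in 𝓝[>] (0 : ℝ), -((s₁ - 1) * q + (s₂ - 1) * p) / 2 < p * q * a :=
    nhdsWithin_le_nhds <| (Continuous.tendsto' (by fun_prop) 0 0 (by simp)).eventually_const_lt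
      (by linarith)
  filter_upwards [second_order, self_mem_nhdsWithin] with a hlt (ha : 0 < a)
  have := mul_lt_mul_of_pos_right hlt ha
  linarith

lemma eventually_sq_mul_pow_kIndex_le (hs₁ : 1 < s₁) (hr : 0 < r)
    (hs : 1 ≤ (s₁ - 1) * (s₂ - 1)) (hpq : 0 < (s₁ - 1) * q + (s₂ - 1) * p) :
    ∀ᶠ a in 𝓝[>] (0 : ℝ), a ^ 2 * (s₁ + p * a) ^ kIndex s₁ s₂ p q r a ≤
      s₁ ^ 2 * (s₁ - 1) / (r * (((s₁ - 1) * q + (s₂ - 1) * p) / 2)) := by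
  set c := ((s₁ - 1) * q + (s₂ - 1) * p) / 2
  have hc : 0 < c := half_pos hpq
  have small : ∀ᶠ a in 𝓝[>] (0 : ℝ), r * a * (s₂ + q * a) < 1 / 2 + r * a :=
    nhdsWithin_le_nhds <| ContinuousAt.eventually_lt (by fun_prop) (by fun_prop) (by norm_num)
  have bound_lt : ∀ᶠ a in 𝓝[>] (0 : ℝ),
      (s₁ + p * a) ^ 2 * (s₁ + p * a - 1) * (1 / 2 + r * a) < s₁ ^ 2 * (s₁ - 1) := by
    have : 0 < s₁ ^ 2 * (s₁ - 1) := mul_pos (by positivity) (sub_pos.mpr hs₁)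
    exact nhdsWithin_le_nhds <|
      (Continuous.tendsto' (by fun_prop) 0 (s₁ ^ 2 * (s₁ - 1) / 2) (by ring)).eventually_lt_const
        (half_lt_self this)
  filter_upwards [eventually_one_lt_slope p hs₁, small, bound_lt,
    eventually_mul_le_slope_gap hs hpq, self_mem_nhdsWithin]
    with a hS hsmall hbound (hgap : c * a ≤ _) (ha : 0 < a)
  have one_le : 1 ≤ (s₁ + p * a - 1) * (s₂ + q * a - 1) := by linarith [mul_pos hc ha]
  rw [le_div_iff₀ (by positivity)]
  calc a ^ 2 * (s₁ + p * a) ^ kIndex s₁ s₂ p q r a * (r * c)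
      = r * a * (c * a) * (s₁ + p * a) ^ kIndex s₁ s₂ p q r a := by ring
    _ ≤ r * a * ((s₁ + p * a - 1) * (s₂ + q * a - 1) - 1) *
          (s₁ + p * a) ^ kIndex s₁ s₂ p q r a := by gcongr
    _ ≤ (s₁ + p * a) ^ 2 * (s₁ + p * a - 1) * (1 / 2 + r * a) :=
      mul_pow_kIndex_le hS (mul_pos hr ha) one_le hsmall
    _ ≤ s₁ ^ 2 * (s₁ - 1) := hbound.le

end Asymptotics

theorem Wmap_a_sq_pow_k1_tendsto_zero_eq_one_general
    (s₁ s₂ p q r : ℝ) (hs₁ : 1 < s₁) (hs₂ : 1 < s₂) (hr : 0 < r)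
    (hpq : 0 < (s₁ - 1) * q + (s₂ - 1) * p) (hsum : 1 / s₁ + 1 / s₂ ≤ 1) :
    Tendsto (fun a => a ^ 2 * (s₁ + p * a) ^ kIndex1 s₁ s₂ p q r a) (𝓝[>] (0 : ℝ)) (𝓝 0) := by
  have hs : 1 ≤ (s₁ - 1) * (s₂ - 1) :=
    one_le_sub_one_mul_sub_one_of_one_div_add_one_div_le_one (by linarith) (by linarith) hsum
  have sq_tendsto : Tendsto (fun a : ℝ => a ^ 2) (𝓝[>] 0) (𝓝 0) :=
    (Continuous.tendsto' (by fun_prop) 0 0 (by simp)).mono_left nhdsWithin_le_nhds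
  have slope_ge : ∀ᶠ a in 𝓝[>] (0 : ℝ), 1 ≤ s₁ + p * a :=
    (eventually_one_lt_slope p hs₁).mono fun _ => le_of_lt
  exact tendsto_mul_pow_zero_of_mul_pow_le sq_tendsto (.of_forall fun a => sq_nonneg a) slope_ge
    (eventually_sq_mul_pow_kIndex_le hs₁ hr hs hpq) (c := 2) (d := 3) (by norm_num)
    fun _ => Nat.mul_div_le _ _

/-- Lemma 3(V): if `1/s₁ + 1/s₂ = 1`, then `a²·(s₁+pa)^{k₁(a)} → 0` as `a → 0⁺`,
where `k₁(a) = ⌊2k(a)/3⌋`. -/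
theorem Wmap_a_sq_pow_k1_tendsto_zero_eq_one
    (s₁ s₂ p q r : ℝ) (hs₁ : 1 < s₁) (hs₂ : 1 < s₂)
    (hp : 0 < p) (hq : 0 < q) (hr : 0 < r)
    (hsum : 1/s₁ + 1/s₂ = 1) :
    Tendsto (fun a => a^2 * (s₁ + p*a)^(kIndex1 s₁ s₂ p q r a))
      (𝓝[>] (0:ℝ)) (𝓝 0) := by
  have hpq : 0 < (s₁ - 1) * q + (s₂ - 1) * p :=
    add_pos (mul_pos (sub_pos.mpr hs₁) hq) (mul_pos (sub_pos.mpr hs₂) hp)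
  exact Wmap_a_sq_pow_k1_tendsto_zero_eq_one_general s₁ s₂ p q r hs₁ hs₂ hr hpq hsum.le
end

section
/- Suppose 1/s₁ + 1/s₂ = 1 and set k₁(a) = ⌊2k(a)/3⌋. Then lim_{a→0⁺} W_a^{k₁(a)}(1/2) = 1/2. -/
open MeasureTheory Filter Topology

/-!
The second branch of `W_a` is an expansion with slope `A = s₁ + pa` about its fixed point
`x* = 1/2 - ra/(A - 1)`. Two steps bring `1/2` to `x* - g` with
`g = ra(s₂ + qa - 1) - ra/(A - 1)`, and `g ≥ 0` because `1/s₁ + 1/s₂ ≤ 1`. From then on the orbit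
stays to the left of `x*` and its distance to `x*` is multiplied by `A` at each step until time `k`,
so that `g A ^ (k - 3) ≤ 1`. At time `k₁ ≤ 2k/3` the distance is `g A ^ (k₁ - 2)`, whose cube is at
most `g * (g A ^ (k - 3)) ^ 2 ≤ g`. Hence `W_a^{k₁}(1/2)` is within `ra + ra/(A - 1) + g ^ (1/3)`
of `1/2`, and this bound tends to `0` with `a`.
-/

lemma iterate_sub_eq_pow_mul_sub {R : Type*} [CommRing R] [PartialOrder R] [IsOrderedRing R]
    {f : R → R} {A c t x : R} {n : ℕ} (hA : 0 ≤ A)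
    (hf : ∀ y ∈ Set.Icc t c, f y - c = A * (y - c)) (hx : x ≤ c)
    (hn : ∀ j < n, t ≤ f^[j] x) : f^[n] x - c = A ^ n * (x - c) := by
  induction n with
  | zero => simp
  | succ n ih =>
    have iterate_sub := ih fun j hj ↦ hn j (hj.trans n.lt_succ_self)
    have iterate_le : f^[n] x ≤ c := by
      rw [← sub_nonpos, iterate_sub]
      exact mul_nonpos_of_nonneg_of_nonpos (pow_nonneg hA n) (sub_nonpos.2 hx)
    rw [Function.iterate_succ_apply', hf _ ⟨hn n n.lt_succ_self, iterate_le⟩, iterate_sub]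
    ring

lemma mul_pow_pow_add_le_pow {R : Type*} [CommSemiring R] [PartialOrder R] [IsOrderedRing R]
    {g A : R} {i j m n : ℕ} (hg : 0 ≤ g) (hA : 1 ≤ A) (hm : g * A ^ m ≤ 1)
    (hmn : (i + j) * n ≤ j * m) : (g * A ^ n) ^ (i + j) ≤ g ^ i := by
  have hA₀ : 0 ≤ A := zero_le_one.trans hA
  calc (g * A ^ n) ^ (i + j) = g ^ (i + j) * A ^ ((i + j) * n) := by ring
    _ ≤ g ^ (i + j) * A ^ (j * m) := by gcongr
    _ = g ^ i * (g * A ^ m) ^ j := by ring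
    _ ≤ g ^ i := mul_le_of_le_one_right (by positivity) (pow_le_one₀ (by positivity) hm)

lemma one_div_sub_one_le_sub_one {K : Type*} [Field K] [LinearOrder K] [IsStrictOrderedRing K]
    {A B : K} (hA : 1 < A) (hB : 0 < B) (hAB : 1 / A + 1 / B ≤ 1) : 1 / (A - 1) ≤ B - 1 := by
  have hA₀ : 0 < A := one_pos.trans hA
  rw [div_add_div _ _ hA₀.ne' hB.ne', div_le_one (mul_pos hA₀ hB)] at hAB
  rw [div_le_iff₀ (sub_pos.2 hA)]
  linarith

namespace Wmap

/-- The fixed point `x*` of the second, increasing branch of `W_a`, from which that branch repels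
the orbit of `1/2`. -/
noncomputable def leftFixedPoint (s₁ p r a : ℝ) : ℝ :=
  1 / 2 - r * a / (s₁ + p * a - 1)

/-- The signed distance `x* - W_a²(1/2)` by which the orbit of `1/2` lies to the left of the fixed
point `x*` after two steps, written in closed form; it sets the time scale of the escape. -/
noncomputable def escapeGap (s₁ s₂ p q r a : ℝ) : ℝ :=
  r * a * (s₂ + q * a - 1) - r * a / (s₁ + p * a - 1)

section FixedPerturbation

variable {s₁ s₂ p q r a : ℝ}

lemma leftFixedPoint_lt_half (hA : 1 < s₁ + p * a) (hra : 0 < r * a) :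
    leftFixedPoint s₁ p r a < 1 / 2 :=
  sub_lt_self _ (div_pos hra (sub_pos.2 hA))

lemma escapeGap_nonneg (hA : 1 < s₁ + p * a) (hB : 0 < s₂ + q * a) (hra : 0 ≤ r * a)
    (hAB : 1 / (s₁ + p * a) + 1 / (s₂ + q * a) ≤ 1) : 0 ≤ escapeGap s₁ s₂ p q r a := by
  have slopes := mul_le_mul_of_nonneg_left (one_div_sub_one_le_sub_one hA hB hAB) hra
  rwa [mul_one_div, ← sub_nonneg] at slopes

lemma apply_sub_leftFixedPoint (hA : 1 < s₁ + p * a) (hra : 0 < r * a) :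
    ∀ x ∈ Set.Icc (1 / 2 - (1 / 2 + r * a) / (s₁ + p * a)) (leftFixedPoint s₁ p r a),
      Wmap s₁ s₂ p q r a x - leftFixedPoint s₁ p r a =
        (s₁ + p * a) * (x - leftFixedPoint s₁ p r a) := by
  rintro x ⟨hx, hx'⟩
  have hA₁ : s₁ + p * a - 1 ≠ 0 := (sub_pos.2 hA).ne'
  rw [Wmap, if_neg hx.not_gt, if_pos (hx'.trans_lt (leftFixedPoint_lt_half hA hra)),
    leftFixedPoint]
  field_simp
  ring

lemma apply_half_add {y : ℝ} (hA : 0 ≤ s₁ + p * a) (hra : 0 ≤ r * a) (hy : 0 ≤ y)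
    (hy' : y < (1 / 2 + r * a) / (s₂ + q * a)) :
    Wmap s₁ s₂ p q r a (1 / 2 + y) = 1 / 2 + r * a - (s₂ + q * a) * y := by
  have hleft : 0 ≤ (1 / 2 + r * a) / (s₁ + p * a) := by positivity
  rw [Wmap, if_neg (by linarith), if_neg (by linarith), if_pos (by linarith)]
  ring

lemma apply_half (hA : 0 ≤ s₁ + p * a) (hB : 0 < s₂ + q * a) (hra : 0 ≤ r * a) :
    Wmap s₁ s₂ p q r a (1 / 2) = 1 / 2 + r * a := by
  simpa using apply_half_add hA hra le_rfl (show 0 < (1 / 2 + r * a) / (s₂ + q * a) by positivity)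

lemma iterate_two_half (hA : 0 ≤ s₁ + p * a) (hB : 0 < s₂ + q * a) (hra : 0 ≤ r * a)
    (hsmall : r * a * (s₂ + q * a) < 1 / 2 + r * a) :
    (Wmap s₁ s₂ p q r a)^[2] (1 / 2) =
      leftFixedPoint s₁ p r a - escapeGap s₁ s₂ p q r a := by
  rw [Function.iterate_succ_apply, Function.iterate_one, apply_half hA hB hra,
    apply_half_add hA hra hra ((lt_div_iff₀ hB).2 hsmall), leftFixedPoint, escapeGap]
  ring

lemma lt_iterate_half_of_lt_kIndex {j : ℕ} (hj : 1 ≤ j) (hjk : j < kIndex s₁ s₂ p q r a) :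
    1 / 2 - (1 / 2 + r * a) / (s₁ + p * a) < (Wmap s₁ s₂ p q r a)^[j] (1 / 2) :=
  not_le.1 fun hle ↦ Nat.notMem_of_lt_sInf hjk ⟨hj, hle⟩

lemma iterate_add_two_half {n : ℕ} (hA : 1 < s₁ + p * a) (hB : 0 < s₂ + q * a) (hra : 0 < r * a)
    (hsmall : r * a * (s₂ + q * a) < 1 / 2 + r * a) (hgap : 0 ≤ escapeGap s₁ s₂ p q r a)
    (hn : n + 2 ≤ kIndex s₁ s₂ p q r a) :
    (Wmap s₁ s₂ p q r a)^[n + 2] (1 / 2) =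
      leftFixedPoint s₁ p r a - escapeGap s₁ s₂ p q r a * (s₁ + p * a) ^ n := by
  have hA₀ : 0 ≤ s₁ + p * a := (one_pos.trans hA).le
  have two_steps := iterate_two_half hA₀ hB hra.le hsmall
  have stays : ∀ j < n, 1 / 2 - (1 / 2 + r * a) / (s₁ + p * a) ≤
      (Wmap s₁ s₂ p q r a)^[j] ((Wmap s₁ s₂ p q r a)^[2] (1 / 2)) := by
    intro j hj
    rw [← Function.iterate_add_apply]
    exact (lt_iterate_half_of_lt_kIndex (by lia) (by lia)).le
  have expansion := iterate_sub_eq_pow_mul_sub hA₀ (apply_sub_leftFixedPoint hA hra)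
    (two_steps.trans_le (sub_le_self _ hgap)) stays
  rw [← Function.iterate_add_apply, two_steps] at expansion
  linear_combination expansion

lemma escapeGap_mul_pow_le_one {m : ℕ} (hA : 1 < s₁ + p * a) (hB : 0 < s₂ + q * a)
    (hra : 0 < r * a) (hra' : r * a ≤ 1 / 2) (hsmall : r * a * (s₂ + q * a) < 1 / 2 + r * a)
    (hgap : 0 ≤ escapeGap s₁ s₂ p q r a) (hm : m + 3 ≤ kIndex s₁ s₂ p q r a) :
    escapeGap s₁ s₂ p q r a * (s₁ + p * a) ^ m ≤ 1 := by
  have not_escaped := lt_iterate_half_of_lt_kIndex (j := m + 2) (by lia) hm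
  rw [iterate_add_two_half hA hB hra hsmall hgap (by lia)] at not_escaped
  have width_le_one : (1 / 2 + r * a) / (s₁ + p * a) ≤ 1 :=
    (div_le_one (by linarith)).2 (by linarith)
  linarith [leftFixedPoint_lt_half hA hra]

lemma escapeGap_mul_pow_le_rpow {n : ℕ} (hA : 1 < s₁ + p * a) (hB : 0 < s₂ + q * a)
    (hra : 0 < r * a) (hra' : r * a ≤ 1 / 2) (hsmall : r * a * (s₂ + q * a) < 1 / 2 + r * a)
    (hgap : 0 ≤ escapeGap s₁ s₂ p q r a) (hn : n + 2 = kIndex1 s₁ s₂ p q r a) :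
    escapeGap s₁ s₂ p q r a * (s₁ + p * a) ^ n ≤ escapeGap s₁ s₂ p q r a ^ (3 : ℝ)⁻¹ := by
  rw [kIndex1] at hn
  obtain ⟨m, hm⟩ : ∃ m, kIndex s₁ s₂ p q r a = m + 3 := Nat.exists_eq_add_of_le' (by lia)
  have at_escape := escapeGap_mul_pow_le_one hA hB hra hra' hsmall hgap hm.ge
  have cube_le := mul_pow_pow_add_le_pow (i := 1) (j := 2) (n := n) hgap hA.le at_escape (by lia)
  have distance_nonneg : 0 ≤ escapeGap s₁ s₂ p q r a * (s₁ + p * a) ^ n :=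
    mul_nonneg hgap (pow_nonneg (one_pos.trans hA).le n)
  rw [Real.le_rpow_inv_iff_of_pos distance_nonneg hgap three_pos]
  exact_mod_cast cube_le.trans_eq (pow_one _)

lemma abs_iterate_kIndex1_half_sub_half_le (hA : 1 < s₁ + p * a) (hB : 0 < s₂ + q * a)
    (hra : 0 < r * a) (hra' : r * a ≤ 1 / 2) (hsmall : r * a * (s₂ + q * a) < 1 / 2 + r * a)
    (hgap : 0 ≤ escapeGap s₁ s₂ p q r a) :
    |(Wmap s₁ s₂ p q r a)^[kIndex1 s₁ s₂ p q r a] (1 / 2) - 1 / 2| ≤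
      r * a + r * a / (s₁ + p * a - 1) + escapeGap s₁ s₂ p q r a ^ (3 : ℝ)⁻¹ := by
  have hA₀ : 0 ≤ s₁ + p * a := (one_pos.trans hA).le
  have fixedPoint_dist : 0 < r * a / (s₁ + p * a - 1) := div_pos hra (sub_pos.2 hA)
  have root_nonneg : 0 ≤ escapeGap s₁ s₂ p q r a ^ (3 : ℝ)⁻¹ := by positivity
  rcases hk₁ : kIndex1 s₁ s₂ p q r a with _ | _ | n
  · rw [Function.iterate_zero_apply, sub_self, abs_zero]
    positivity
  · rw [zero_add, Function.iterate_one, apply_half hA₀ hB hra.le, add_sub_cancel_left,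
      abs_of_pos hra]
    linarith
  · have k₁_le_k : n + 2 ≤ kIndex s₁ s₂ p q r a := by
      rw [kIndex1] at hk₁
      lia
    have growth := escapeGap_mul_pow_le_rpow hA hB hra hra' hsmall hgap hk₁.symm
    have gap_nonneg : 0 ≤ escapeGap s₁ s₂ p q r a * (s₁ + p * a) ^ n := by positivity
    rw [iterate_add_two_half hA hB hra hsmall hgap k₁_le_k, leftFixedPoint, abs_le]
    constructor <;> linarith

end FixedPerturbation

section VanishingPerturbation

variable {s₁ : ℝ} (s₂ p q r : ℝ)

lemma tendsto_div_sub_one (hs₁ : s₁ ≠ 1) :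
    Tendsto (fun a ↦ r * a / (s₁ + p * a - 1)) (𝓝 0) (𝓝 0) := by
  have hcont : ContinuousAt (fun a ↦ r * a / (s₁ + p * a - 1)) 0 :=
    ContinuousAt.div (by fun_prop) (by fun_prop) (by simpa [sub_eq_zero] using hs₁)
  simpa using hcont.tendsto

lemma tendsto_escapeGap (hs₁ : s₁ ≠ 1) :
    Tendsto (fun a ↦ escapeGap s₁ s₂ p q r a) (𝓝 0) (𝓝 0) := by
  have hcont : Continuous fun a ↦ r * a * (s₂ + q * a - 1) := by fun_prop
  simpa [escapeGap] using (hcont.tendsto 0).sub (tendsto_div_sub_one p r hs₁)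

lemma tendsto_iterate_bound (hs₁ : s₁ ≠ 1) :
    Tendsto (fun a ↦ r * a + r * a / (s₁ + p * a - 1) + escapeGap s₁ s₂ p q r a ^ (3 : ℝ)⁻¹)
      (𝓝 0) (𝓝 0) := by
  have root := (tendsto_escapeGap s₂ p q r hs₁).rpow_const (p := (3 : ℝ)⁻¹) (.inr (by positivity))
  have height : Tendsto (fun a ↦ r * a) (𝓝 0) (𝓝 0) := by
    simpa using (continuous_const_mul r).tendsto 0
  simpa using (height.add (tendsto_div_sub_one p r hs₁)).add root

lemma eventually_perturbation_small :
    ∀ᶠ a in 𝓝 (0 : ℝ), r * a < 1 / 2 ∧ r * a * (s₂ + q * a) < 1 / 2 + r * a := by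
  have height : ContinuousAt (fun a : ℝ ↦ r * a) 0 := by fun_prop
  have drop : ContinuousAt (fun a ↦ r * a * (s₂ + q * a)) 0 := by fun_prop
  have rise : ContinuousAt (fun a ↦ 1 / 2 + r * a) 0 := by fun_prop
  exact (height.eventually_lt continuousAt_const (by norm_num)).and
    (drop.eventually_lt rise (by norm_num))

end VanishingPerturbation

end Wmap

theorem Wmap_iterate_k1_tendsto_half_eq_one_general
    (s₁ s₂ p q r : ℝ) (hs₁ : 1 < s₁) (hs₂ : 1 < s₂)
    (hp : 0 < p) (hq : 0 < q) (hr : 0 < r)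
    (hsum : 1 / s₁ + 1 / s₂ ≤ 1) :
    Tendsto (fun a => (Wmap s₁ s₂ p q r a)^[kIndex1 s₁ s₂ p q r a] (1 / 2))
      (𝓝[>] (0:ℝ)) (𝓝 (1 / 2)) := by
  rw [← tendsto_sub_nhds_zero_iff]
  refine squeeze_zero_norm' ?_
    ((Wmap.tendsto_iterate_bound s₂ p q r hs₁.ne').mono_left nhdsWithin_le_nhds)
  filter_upwards [self_mem_nhdsWithin,
    (Wmap.eventually_perturbation_small s₂ q r).filter_mono nhdsWithin_le_nhds]
    with a (ha : 0 < a) ⟨hra', hsmall⟩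
  have s₁_le : s₁ ≤ s₁ + p * a := le_add_of_nonneg_right (by positivity)
  have s₂_le : s₂ ≤ s₂ + q * a := le_add_of_nonneg_right (by positivity)
  have hA : 1 < s₁ + p * a := hs₁.trans_le s₁_le
  have hB : 0 < s₂ + q * a := by positivity
  have hra : 0 < r * a := mul_pos hr ha
  have sum_le_one : 1 / (s₁ + p * a) + 1 / (s₂ + q * a) ≤ 1 :=
    (add_le_add (one_div_le_one_div_of_le (by positivity) s₁_le)
      (one_div_le_one_div_of_le (by positivity) s₂_le)).trans hsum
  exact Wmap.abs_iterate_kIndex1_half_sub_half_le hA hB hra hra'.le hsmall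
    (Wmap.escapeGap_nonneg hA hB hra.le sum_le_one)

/-- Lemma 3(VI): if `1/s₁ + 1/s₂ = 1`, then `W_a^{k₁(a)}(1/2) → 1/2` as `a → 0⁺`,
where `k₁(a) = ⌊2k(a)/3⌋`. -/
theorem Wmap_iterate_k1_tendsto_half_eq_one
    (s₁ s₂ p q r : ℝ) (hs₁ : 1 < s₁) (hs₂ : 1 < s₂)
    (hp : 0 < p) (hq : 0 < q) (hr : 0 < r)
    (hsum : 1/s₁ + 1/s₂ = 1) :
    Tendsto (fun a => (Wmap s₁ s₂ p q r a)^[kIndex1 s₁ s₂ p q r a] (1/2))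
      (𝓝[>] (0:ℝ)) (𝓝 (1/2)) := by
  exact Wmap_iterate_k1_tendsto_half_eq_one_general s₁ s₂ p q r hs₁ hs₂ hp hq hr hsum.le
end

section
/- Suppose 1/s₁ + 1/s₂ ≤ 1, and suppose there exist a₀ > 0 and M > 0 such that for all 0 < a < a₀ the normalized invariant density h_a of W_a satisfies h_a ≤ M Lebesgue-almost everywhere. Then h_a → h_0 in L¹([0,1], λ) as a → 0⁺, where h_0 is the normalized invariant density of W_0. -/
open MeasureTheory Filter Topology

/-- The invariant density of the unperturbed Markov map `W₀`. -/
noncomputable def h0 (s₁ s₂ : ℝ) (x : ℝ) : ℝ :=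
  if x < 1/2 then 2*s₁*(s₂+1)/(2*s₁*s₂+s₁-s₂) else 2*s₂*(s₁-1)/(2*s₁*s₂+s₁-s₂)

/-!
The invariant measures are compared with Lebesgue measure by duality, through test functions `u`
of zero mean with `|∫₀ˣ u| ≤ τ` for all `x`. Each half of a W-map consists of a full branch, over
which `u ∘ W` has integral zero, and an expanding branch, so on each half the primitives of `u ∘ W`
are bounded by `θτ` with `θ < 1`. The only obstruction to iterating is that the primitives coming
from the two ends of `[0, 1]` need not match up at the turning point `1/2`. Since the invariant
measure is at most `M` times Lebesgue measure, changing `u ∘ W` near `1/2` to repair this costs at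
most a multiple of `Mτ`. Summing the resulting geometric series gives `|∫ u dμ| ≤ Cτ` uniformly in
the map, which is a variation bound on the invariant densities in dual form.

If `u` has zero mean on both halves, then so has `u ∘ W`, up to an error of the order of the
perturbation `e` of the turning value. Hence `n` iterations contract the primitives by `θⁿ` up to an
error of order `e`, and for small `e` the density is `L¹`-close to a function that is constant on
each half. The mass of the right half is then determined by the stationarity equation of a two-state
Markov chain, whose solution yields `h0`.
-/

open scoped NNReal ENNReal Interval

section BoundedFunctions

variable {α : Type*} {_ : MeasurableSpace α} {μ : Measure α} {u v : α → ℝ} {K : ℝ}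

lemma integrable_of_forall_abs_le [IsFiniteMeasure μ] (hu : Measurable u)
    (huK : ∀ x, |u x| ≤ K) : Integrable u μ :=
  .of_bound hu.aestronglyMeasurable K (.of_forall huK)

lemma intervalIntegrable_of_forall_abs_le {u : ℝ → ℝ} (hu : Measurable u) (huK : ∀ x, |u x| ≤ K)
    (a b : ℝ) : IntervalIntegrable u volume a b :=
  ⟨integrable_of_forall_abs_le hu huK, integrable_of_forall_abs_le hu huK⟩

lemma abs_intervalIntegral_le_of_forall_abs_le {u : ℝ → ℝ} (huK : ∀ x, |u x| ≤ K) (a b : ℝ) :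
    |∫ x in a..b, u x| ≤ K * |b - a| := by
  rw [← Real.norm_eq_abs]
  exact intervalIntegral.norm_integral_le_of_norm_le_const fun x _ => huK x

lemma abs_integral_le_of_forall_abs_le [IsProbabilityMeasure μ] (huK : ∀ x, |u x| ≤ K) :
    |∫ x, u x ∂μ| ≤ K := by
  simpa using norm_integral_le_of_norm_le_const (μ := μ) (f := u) (C := K) (.of_forall huK)

lemma abs_integral_sub_le_of_eqOn_compl [IsFiniteMeasure μ] {S : Set α}
    (hu : Measurable u) (hv : Measurable v) (huK : ∀ x, |u x| ≤ K) (hvK : ∀ x, |v x| ≤ K)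
    (huv : Sᶜ.EqOn u v) : |∫ x, u x ∂μ - ∫ x, v x ∂μ| ≤ 2 * K * μ.real S := by
  have hzero : ∀ x ∉ S, u x - v x = 0 := fun x hx => sub_eq_zero.2 (huv hx)
  rw [← integral_sub (integrable_of_forall_abs_le hu huK) (integrable_of_forall_abs_le hv hvK),
    ← setIntegral_eq_integral_of_forall_compl_eq_zero hzero, ← Real.norm_eq_abs]
  refine norm_setIntegral_le_of_norm_le_const (measure_lt_top μ S) fun x _ => ?_
  calc |u x - v x| ≤ |u x| + |v x| := abs_sub _ _
    _ ≤ 2 * K := by linarith [huK x, hvK x]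

lemma exists_measurable_abs_eq_mul {f : α → ℝ} (hf : Measurable f) :
    ∃ σ : α → ℝ, Measurable σ ∧ (∀ x, |σ x| ≤ 1) ∧ ∀ x, |f x| = σ x * f x := by
  refine ⟨fun x => if 0 ≤ f x then 1 else -1,
    Measurable.ite (measurableSet_le measurable_const hf) measurable_const measurable_const,
    fun x => ?_, fun x => ?_⟩ <;> dsimp only <;> split_ifs with hx
  · exact abs_one.le
  · rw [abs_neg, abs_one]
  · rw [abs_of_nonneg hx, one_mul]
  · rw [abs_of_neg (not_le.1 hx), neg_one_mul]

end BoundedFunctions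

section Primitives

variable {a b : ℝ}

lemma integral_mul_eq_of_contDiff {φ u : ℝ → ℝ} (hφ : ContDiff ℝ 1 φ)
    (hu : IntervalIntegrable u volume a b) :
    ∫ x in a..b, φ x * u x =
      φ b * (∫ x in a..b, u x) - ∫ x in a..b, deriv φ x * ∫ y in a..x, u y := by
  have hprimitive : ∀ᵐ x, x ∈ Ι a b → deriv (fun z => ∫ y in a..z, u y) x = u x := by
    filter_upwards [hu.ae_hasDerivAt_integral] with x hx hxab
    exact (hx (Set.uIoc_subset_uIcc hxab) a Set.left_mem_uIcc).deriv
  have hparts := hφ.contDiffOn.absolutelyContinuousOnInterval.integral_mul_deriv_eq_deriv_mul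
    (hu.absolutelyContinuousOnInterval_intervalIntegral Set.left_mem_uIcc)
  rw [intervalIntegral.integral_same, mul_zero, sub_zero] at hparts
  rw [← hparts]
  refine intervalIntegral.integral_congr_ae ?_
  filter_upwards [hprimitive] with x hx hxab
  rw [hx hxab]

lemma abs_integral_mul_le_of_contDiff {φ u : ℝ → ℝ} {τ : ℝ} (hab : a ≤ b) (hφ : ContDiff ℝ 1 φ)
    (hu : IntervalIntegrable u volume a b) (huτ : ∀ x ∈ Set.Icc a b, |∫ y in a..x, u y| ≤ τ) :
    |∫ x in a..b, φ x * u x| ≤ (|φ b| + ∫ x in a..b, |deriv φ x|) * τ := by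
  have hφ' : Continuous fun x => |deriv φ x| := (hφ.continuous_deriv le_rfl).abs
  have htail : |∫ x in a..b, deriv φ x * ∫ y in a..x, u y| ≤ (∫ x in a..b, |deriv φ x|) * τ := by
    rw [← intervalIntegral.integral_mul_const, ← Real.norm_eq_abs]
    refine intervalIntegral.norm_integral_le_of_norm_le hab (.of_forall fun x hx => ?_)
      ((hφ'.mul continuous_const).intervalIntegrable a b)
    rw [norm_mul, Real.norm_eq_abs, Real.norm_eq_abs]
    exact mul_le_mul_of_nonneg_left (huτ x (Set.Ioc_subset_Icc_self hx)) (abs_nonneg _)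
  have hend : |φ b * ∫ x in a..b, u x| ≤ |φ b| * τ := by
    rw [abs_mul]
    exact mul_le_mul_of_nonneg_left (huτ b (Set.right_mem_Icc.2 hab)) (abs_nonneg _)
  rw [integral_mul_eq_of_contDiff hφ hu, add_mul]
  exact (abs_sub _ _).trans (add_le_add hend htail)

lemma exists_contDiff_integral_abs_sub_le {f : ℝ → ℝ} {μ : Measure ℝ} [IsFiniteMeasureOnCompacts μ]
    (hf : Integrable f μ) {ε : ℝ} (hε : 0 < ε) :
    ∃ φ : ℝ → ℝ, ContDiff ℝ 1 φ ∧ Integrable φ μ ∧ ∫ x, |f x - φ x| ∂μ ≤ ε := by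
  obtain ⟨φ, hφsupp, hφ, hle⟩ :=
    (memLp_one_iff_integrable.2 hf).exist_eLpNorm_sub_le ENNReal.one_ne_top le_rfl hε
  have hφint : Integrable φ μ := hφ.continuous.integrable_of_hasCompactSupport hφsupp
  refine ⟨φ, hφ.of_le (by exact_mod_cast le_top), hφint, ?_⟩
  rw [eLpNorm_one_eq_lintegral_enorm, ← ofReal_integral_norm_eq_lintegral_enorm (hf.sub hφint),
    ENNReal.ofReal_le_ofReal_iff hε.le] at hle
  exact hle

lemma exists_forall_abs_integral_mul_le {f : ℝ → ℝ} (hab : a ≤ b)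
    (hf : Integrable f (volume.restrict (Set.Icc a b))) {K ε : ℝ} (hε : 0 < ε) :
    ∃ δ > 0, ∀ u : ℝ → ℝ, Measurable u → (∀ x, |u x| ≤ K) →
      (∀ x ∈ Set.Icc a b, |∫ y in a..x, u y| ≤ δ) → |∫ x in Set.Icc a b, f x * u x| ≤ ε := by
  obtain ⟨φ, hφ, hφint, hfφ⟩ := exists_contDiff_integral_abs_sub_le hf
    (show 0 < ε / (2 * (|K| + 1)) by positivity)
  set c : ℝ := |φ b| + ∫ x in a..b, |deriv φ x|
  have hc : 0 ≤ c := add_nonneg (abs_nonneg _)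
    (intervalIntegral.integral_nonneg hab fun x _ => abs_nonneg _)
  refine ⟨ε / (2 * (c + 1)), by positivity, fun u hu huK huδ => ?_⟩
  have hmul : ∀ {g : ℝ → ℝ}, Integrable g (volume.restrict (Set.Icc a b)) →
      Integrable (fun x => g x * u x) (volume.restrict (Set.Icc a b)) := fun hg =>
    hg.mul_bdd hu.aestronglyMeasurable (.of_forall huK)
  have hdiff : Integrable (fun x => f x - φ x) (volume.restrict (Set.Icc a b)) := hf.sub hφint
  have hrough : |∫ x in Set.Icc a b, (f x - φ x) * u x| ≤ ε / 2 := by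
    calc |∫ x in Set.Icc a b, (f x - φ x) * u x|
        ≤ ∫ x in Set.Icc a b, |f x - φ x| * (|K| + 1) := by
          rw [← Real.norm_eq_abs]
          refine norm_integral_le_of_norm_le (hdiff.abs.mul_const _) (.of_forall fun x => ?_)
          rw [norm_mul, Real.norm_eq_abs, Real.norm_eq_abs]
          exact mul_le_mul_of_nonneg_left (by linarith [huK x, le_abs_self K]) (abs_nonneg _)
      _ ≤ ε / (2 * (|K| + 1)) * (|K| + 1) := by
          rw [integral_mul_const]; gcongr
      _ = ε / 2 := by field_simp
  have hsmooth : |∫ x in Set.Icc a b, φ x * u x| ≤ ε / 2 := by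
    rw [integral_Icc_eq_integral_Ioc, ← intervalIntegral.integral_of_le hab]
    calc |∫ x in a..b, φ x * u x| ≤ c * (ε / (2 * (c + 1))) :=
          abs_integral_mul_le_of_contDiff hab hφ
            (intervalIntegrable_of_forall_abs_le hu huK a b) huδ
      _ ≤ (c + 1) * (ε / (2 * (c + 1))) := by gcongr; linarith
      _ = ε / 2 := by field_simp
  calc |∫ x in Set.Icc a b, f x * u x|
      = |(∫ x in Set.Icc a b, (f x - φ x) * u x) + ∫ x in Set.Icc a b, φ x * u x| := by
        rw [← integral_add (hmul hdiff) (hmul hφint)]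
        simp only [← add_mul, sub_add_cancel]
    _ ≤ ε / 2 + ε / 2 := (abs_add_le _ _).trans (add_le_add hrough hsmooth)
    _ = ε := add_halves ε

lemma exists_forall_abs_integral_le_of_absolutelyContinuous {μ : Measure ℝ} [IsFiniteMeasure μ]
    (hab : a ≤ b) (hμ : μ ≪ volume.restrict (Set.Icc a b)) {K ε : ℝ} (hε : 0 < ε) :
    ∃ δ > 0, ∀ u : ℝ → ℝ, Measurable u → (∀ x, |u x| ≤ K) →
      (∀ x ∈ Set.Icc a b, |∫ y in a..x, u y| ≤ δ) → |∫ x, u x ∂μ| ≤ ε := by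
  simp_rw [← integral_toReal_rnDeriv_mul hμ]
  exact exists_forall_abs_integral_mul_le hab Measure.integrable_toReal_rnDeriv hε

end Primitives

section NonMeasurableDensities

variable {α : Type*} {_ : MeasurableSpace α} {ν : Measure α}

-- The integrand `|h - k|` may be measurable without `h` being so. In that case `h` lies above
-- whichever of the measurable functions `k ± |h - k|` is the first to dominate `g`, so that
-- function has the same integral as `g` and hence equals `g` almost everywhere.
lemma integral_abs_sub_le_of_measurable_minorant {g h k : α → ℝ} (hg : Measurable g)
    (hk : Measurable k) (hg0 : ∀ x, 0 ≤ g x) (hgh : ∀ᵐ x ∂ν, g x ≤ h x)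
    (hfin : ∫⁻ x, ENNReal.ofReal (g x) ∂ν ≠ ∞)
    (hle : ∫⁻ x, ENNReal.ofReal (h x) ∂ν ≤ ∫⁻ x, ENNReal.ofReal (g x) ∂ν) :
    ∫ x, |h x - k x| ∂ν ≤ ∫ x, |g x - k x| ∂ν := by
  by_cases hmeas : AEStronglyMeasurable (fun x => |h x - k x|) ν
  swap
  · rw [integral_non_aestronglyMeasurable hmeas]
    exact integral_nonneg fun x => abs_nonneg _
  set d : α → ℝ := hmeas.mk
  have hd : Measurable d := hmeas.stronglyMeasurable_mk.measurable
  have hhd : ∀ᵐ x ∂ν, |h x - k x| = d x := hmeas.ae_eq_mk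
  set g' : α → ℝ := fun x => if k x - d x < g x then k x + d x else k x - d x with hg'_def
  have hg' : Measurable g' :=
    Measurable.ite (measurableSet_lt (hk.sub hd) hg) (hk.add hd) (hk.sub hd)
  have hbetween : ∀ᵐ x ∂ν, g x ≤ g' x ∧ g' x ≤ h x := by
    filter_upwards [hhd, hgh] with x hx hghx
    simp only [hg'_def]
    rcases abs_cases (h x - k x) with ⟨_, _⟩ | ⟨_, _⟩ <;> split_ifs <;> constructor <;> linarith
  have heq : (fun x => ENNReal.ofReal (g x)) =ᵐ[ν] fun x => ENNReal.ofReal (g' x) := by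
    refine ae_eq_of_ae_le_of_lintegral_le ?_ hfin hg'.ennreal_ofReal.aemeasurable (le_trans ?_ hle)
    · filter_upwards [hbetween] with x hx using ENNReal.ofReal_le_ofReal hx.1
    · refine lintegral_mono_ae ?_
      filter_upwards [hbetween] with x hx using ENNReal.ofReal_le_ofReal hx.2
  refine (integral_congr_ae ?_).le
  filter_upwards [hbetween, heq, hhd] with x hx hgx hdx
  have hgg' : g x = g' x :=
    (ENNReal.ofReal_eq_ofReal_iff (hg0 x) ((hg0 x).trans hx.1)).1 hgx
  have hd0 : |d x| = d x := abs_of_nonneg (hdx ▸ abs_nonneg _)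
  rw [hdx, hgg', hg'_def]
  dsimp only
  split_ifs
  · rw [add_sub_cancel_left, hd0]
  · rw [sub_sub_cancel_left, abs_neg, hd0]

lemma integral_abs_sub_le_integral_abs_rnDeriv_sub [SigmaFinite ν] {h k : α → ℝ} {μ : Measure α}
    [IsFiniteMeasure μ] (hh : ∀ᵐ x ∂ν, 0 ≤ h x)
    (hμ : μ = ν.withDensity fun x => ENNReal.ofReal (h x)) (hk : Measurable k) :
    ∫ x, |h x - k x| ∂ν ≤ ∫ x, |(μ.rnDeriv ν x).toReal - k x| ∂ν := by
  obtain ⟨g, hg, hgh, hgμ⟩ :=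
    exists_measurable_le_withDensity_eq ν fun x => ENNReal.ofReal (h x)
  rw [← hμ] at hgμ
  have hgtop : ∀ x, g x ≠ ∞ := fun x => ((hgh x).trans_lt ENNReal.ofReal_lt_top).ne
  have hrn : μ.rnDeriv ν =ᵐ[ν] g := by
    rw [← hgμ]
    exact ν.rnDeriv_withDensity hg
  have hgμ_univ : ∫⁻ x, g x ∂ν = μ Set.univ := by
    rw [← hgμ, withDensity_apply _ .univ, Measure.restrict_univ]
  have hhμ_univ : ∫⁻ x, ENNReal.ofReal (h x) ∂ν = μ Set.univ := by
    rw [hμ, withDensity_apply _ .univ, Measure.restrict_univ]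
  calc ∫ x, |h x - k x| ∂ν ≤ ∫ x, |(g x).toReal - k x| ∂ν := by
        refine integral_abs_sub_le_of_measurable_minorant hg.ennreal_toReal hk
          (fun x => ENNReal.toReal_nonneg) ?_ ?_ ?_
        · filter_upwards [hh] with x hx
          exact ENNReal.toReal_le_of_le_ofReal hx (hgh x)
        · simp only [ENNReal.ofReal_toReal (hgtop _), hgμ_univ, measure_ne_top, ne_eq,
            not_false_eq_true]
        · simp only [ENNReal.ofReal_toReal (hgtop _), hgμ_univ, hhμ_univ, le_refl]
    _ = ∫ x, |(μ.rnDeriv ν x).toReal - k x| ∂ν := by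
        refine integral_congr_ae ?_
        filter_upwards [hrn] with x hx
        rw [hx]

end NonMeasurableDensities

/-- The zero-mean test functions on `[0, 1]`: `K` bounds the function and `τ` its primitive. The
primitive is the seminorm that contracts under the dynamics, so bounds in terms of `τ` amount to
variation bounds on densities. -/
structure IsTestFunction (K τ : ℝ) (u : ℝ → ℝ) : Prop where
  measurable : Measurable u
  abs_le : ∀ x, |u x| ≤ K
  abs_integral_le : ∀ x ∈ Set.Icc (0 : ℝ) 1, |∫ y in (0 : ℝ)..x, u y| ≤ τ
  integral_eq_zero : ∫ y in (0 : ℝ)..1, u y = 0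

section Branch

/-- The length of the interval carrying the full branch of `wBranch s e`. -/
noncomputable def outerWidth (s e : ℝ) : ℝ := 1 / 2 - (1 / 2 + e) / s

/-- The left half of a W-map whose middle vertex is `(1/2, 1/2 + e)` and whose inner slope is `s`:
a decreasing full branch followed by an increasing branch. -/
noncomputable def wBranch (s e x : ℝ) : ℝ :=
  if x < outerWidth s e then 1 - x / outerWidth s e else s * (x - 1 / 2) + 1 / 2 + e

/-- The parameters for which both branches of `wBranch s e` are nondegenerate and contract
primitives by the factor `θ`. -/
structure IsExpandingBranch (θ s e : ℝ) : Prop where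
  half_le : 1 / 2 ≤ θ
  lt_one : θ < 1
  inv_le : s⁻¹ ≤ θ
  abs_le_half : |e| ≤ 1 / 2
  one_add_lt : 1 + 2 * e < s

variable {θ s e K τ x : ℝ} {u : ℝ → ℝ}

@[fun_prop]
lemma measurable_wBranch : Measurable (wBranch s e) :=
  Measurable.ite measurableSet_Iio (by fun_prop) (by fun_prop)

lemma outerWidth_eq_div (hs : s ≠ 0) : outerWidth s e = (s - 1 - 2 * e) / (2 * s) := by
  rw [outerWidth]
  field_simp
  ring

lemma outerWidth_zero (hs : s ≠ 0) : outerWidth s 0 = (s - 1) / (2 * s) := by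
  rw [outerWidth_eq_div hs, mul_zero, sub_zero]

namespace IsExpandingBranch

lemma nonneg (h : IsExpandingBranch θ s e) : 0 ≤ θ := by linarith [h.half_le]

lemma vertex_mem (h : IsExpandingBranch θ s e) : 1 / 2 + e ∈ Set.Icc (0 : ℝ) 1 := by
  have := abs_le.1 h.abs_le_half
  constructor <;> linarith

lemma slope_pos (h : IsExpandingBranch θ s e) : 0 < s := by
  linarith [h.one_add_lt, h.vertex_mem.1]

lemma mul_outerWidth (h : IsExpandingBranch θ s e) : s * outerWidth s e = s / 2 - (1 / 2 + e) := by
  rw [outerWidth, mul_sub, mul_div_cancel₀ _ h.slope_pos.ne']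
  ring

lemma outerWidth_pos (h : IsExpandingBranch θ s e) : 0 < outerWidth s e := by
  rw [← mul_pos_iff_of_pos_left h.slope_pos, h.mul_outerWidth]
  linarith [h.one_add_lt]

lemma outerWidth_le_half (h : IsExpandingBranch θ s e) : outerWidth s e ≤ 1 / 2 :=
  sub_le_self _ (div_nonneg h.vertex_mem.1 h.slope_pos.le)

lemma inv_outerWidth (h : IsExpandingBranch θ s e) :
    (outerWidth s e)⁻¹ = 2 * s / (s - 1 - 2 * e) := by
  rw [outerWidth_eq_div h.slope_pos.ne', inv_div]

lemma wBranch_of_le (h : IsExpandingBranch θ s e)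
    (hx : x ≤ outerWidth s e) : wBranch s e x = 1 - x / outerWidth s e := by
  rcases hx.lt_or_eq with hlt | rfl
  · exact if_pos hlt
  · rw [wBranch, if_neg (lt_irrefl _), mul_sub, h.mul_outerWidth, div_self h.outerWidth_pos.ne']
    ring

lemma integral_comp_wBranch_of_le_outerWidth (h : IsExpandingBranch θ s e) (hx0 : 0 ≤ x)
    (hx : x ≤ outerWidth s e) :
    ∫ y in 0..x, u (wBranch s e y) = outerWidth s e * ∫ y in (1 - x / outerWidth s e)..1, u y := by
  have hcongr : Set.EqOn (fun y => u (wBranch s e y)) (fun y => u (1 - y / outerWidth s e))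
      (Set.Ioo 0 x) := fun y hy => by
    simp only [wBranch, if_pos (hy.2.trans_le hx)]
  rw [intervalIntegral.integral_congr_Ioo_of_le hx0 hcongr,
    intervalIntegral.integral_comp_sub_div u h.outerWidth_pos.ne', zero_div, sub_zero, smul_eq_mul]

lemma integral_comp_wBranch_of_outerWidth_le (h : IsExpandingBranch θ s e)
    (hx : outerWidth s e ≤ x) :
    ∫ y in outerWidth s e..x, u (wBranch s e y) =
      s⁻¹ * ∫ y in 0..(s * (x - 1 / 2) + 1 / 2 + e), u y := by
  have hcongr : Set.EqOn (fun y => u (wBranch s e y)) (fun y => u (s * y + (1 / 2 + e - s / 2)))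
      (Set.Ioo (outerWidth s e) x) := fun y hy => by
    simp only [wBranch, if_neg hy.1.not_gt]
    ring_nf
  rw [intervalIntegral.integral_congr_Ioo_of_le hx hcongr,
    intervalIntegral.integral_comp_mul_add u h.slope_pos.ne', smul_eq_mul, h.mul_outerWidth]
  ring_nf

lemma integral_comp_wBranch (h : IsExpandingBranch θ s e) (hu : Measurable u)
    (huK : ∀ x, |u x| ≤ K) (hx : outerWidth s e ≤ x) :
    ∫ y in 0..x, u (wBranch s e y) = outerWidth s e * (∫ y in (0 : ℝ)..1, u y) +
      s⁻¹ * ∫ y in 0..(s * (x - 1 / 2) + 1 / 2 + e), u y := by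
  have hint : ∀ a b, IntervalIntegrable (fun y => u (wBranch s e y)) volume a b :=
    intervalIntegrable_of_forall_abs_le (hu.comp measurable_wBranch) fun _ => huK _
  rw [← intervalIntegral.integral_add_adjacent_intervals (hint 0 (outerWidth s e)) (hint _ x),
    h.integral_comp_wBranch_of_outerWidth_le hx,
    h.integral_comp_wBranch_of_le_outerWidth h.outerWidth_pos.le le_rfl,
    div_self h.outerWidth_pos.ne', sub_self]

lemma abs_integral_comp_wBranch_le (h : IsExpandingBranch θ s e) (hu : IsTestFunction K τ u)
    (hx : x ∈ Set.Icc (0 : ℝ) (1 / 2)) : |∫ y in 0..x, u (wBranch s e y)| ≤ θ * τ := by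
  rcases le_total x (outerWidth s e) with hxb | hbx
  · have hmem : 1 - x / outerWidth s e ∈ Set.Icc (0 : ℝ) 1 :=
      ⟨sub_nonneg.2 (div_le_one_of_le₀ hxb h.outerWidth_pos.le),
        sub_le_self _ (div_nonneg hx.1 h.outerWidth_pos.le)⟩
    have hint := intervalIntegrable_of_forall_abs_le hu.measurable hu.abs_le
    have hneg : ∫ y in (1 - x / outerWidth s e)..1, u y =
        -∫ y in 0..(1 - x / outerWidth s e), u y := by
      rw [eq_neg_iff_add_eq_zero, add_comm,
        intervalIntegral.integral_add_adjacent_intervals (hint _ _) (hint _ _), hu.integral_eq_zero]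
    rw [h.integral_comp_wBranch_of_le_outerWidth hx.1 hxb, hneg, abs_mul, abs_neg,
      abs_of_pos h.outerWidth_pos]
    exact mul_le_mul (h.outerWidth_le_half.trans h.half_le) (hu.abs_integral_le _ hmem)
      (abs_nonneg _) h.nonneg
  · have hmem : s * (x - 1 / 2) + 1 / 2 + e ∈ Set.Icc (0 : ℝ) 1 := by
      have hlow := mul_le_mul_of_nonneg_left hbx h.slope_pos.le
      have hupp := mul_le_mul_of_nonneg_left hx.2 h.slope_pos.le
      rw [h.mul_outerWidth] at hlow
      constructor <;> linarith [h.vertex_mem.2]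
    rw [h.integral_comp_wBranch hu.measurable hu.abs_le hbx, hu.integral_eq_zero, mul_zero,
      zero_add, abs_mul, abs_of_pos (inv_pos.2 h.slope_pos)]
    exact mul_le_mul h.inv_le (hu.abs_integral_le _ hmem) (abs_nonneg _) h.nonneg

lemma abs_integral_comp_wBranch_half_sub_le (h : IsExpandingBranch θ s e) (hu : Measurable u)
    (huK : ∀ x, |u x| ≤ K) (hhalf : ∫ y in (0 : ℝ)..1 / 2, u y = 0) :
    |(∫ y in (0 : ℝ)..1 / 2, u (wBranch s e y)) - outerWidth s e * ∫ y in (0 : ℝ)..1, u y| ≤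
      K * |e| := by
  have hint := intervalIntegrable_of_forall_abs_le hu huK
  have hvertex : ∫ y in (0 : ℝ)..1 / 2 + e, u y = ∫ y in (1 / 2 : ℝ)..1 / 2 + e, u y := by
    rw [← intervalIntegral.integral_add_adjacent_intervals (hint 0 (1 / 2)) (hint _ _), hhalf,
      zero_add]
  rw [h.integral_comp_wBranch hu huK h.outerWidth_le_half, add_sub_cancel_left, sub_self, mul_zero,
    zero_add, hvertex, abs_mul, abs_of_pos (inv_pos.2 h.slope_pos)]
  calc s⁻¹ * |∫ y in (1 / 2 : ℝ)..1 / 2 + e, u y| ≤ 1 * (K * |1 / 2 + e - 1 / 2|) :=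
        mul_le_mul (h.inv_le.trans h.lt_one.le) (abs_intervalIntegral_le_of_forall_abs_le huK _ _)
          (abs_nonneg _) zero_le_one
    _ = K * |e| := by rw [one_mul, add_sub_cancel_left]

end IsExpandingBranch

end Branch

/-- The W-map with inner slopes `s` and `-t` and middle vertex `(1/2, 1/2 + e)`, whose right half
is the mirror image of a `wBranch`. -/
noncomputable def wMap (s t e x : ℝ) : ℝ :=
  if x < 1 / 2 then wBranch s e x else wBranch t e (1 - x)

/-- A bound on the primitives of `v` on the two halves of `[0, 1]`, each one started at the outer
endpoint. Unlike in `IsTestFunction`, `v` need not have zero mean. -/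
structure HasHalfPrimitiveBound (ρ : ℝ) (v : ℝ → ℝ) : Prop where
  left : ∀ x ∈ Set.Icc (0 : ℝ) (1 / 2), |∫ y in (0 : ℝ)..x, v y| ≤ ρ
  right : ∀ x ∈ Set.Icc (1 / 2 : ℝ) 1, |∫ y in x..1, v y| ≤ ρ

section WMap

variable {θ s t e K τ x : ℝ} {u : ℝ → ℝ}

@[fun_prop]
lemma measurable_wMap : Measurable (wMap s t e) :=
  Measurable.ite measurableSet_Iio (by fun_prop) (by fun_prop)

lemma integral_comp_wMap_left (hx : x ∈ Set.Icc (0 : ℝ) (1 / 2)) :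
    ∫ y in 0..x, u (wMap s t e y) = ∫ y in 0..x, u (wBranch s e y) :=
  intervalIntegral.integral_congr_Ioo_of_le hx.1 fun y hy => by
    simp only [wMap, if_pos (hy.2.trans_le hx.2)]

lemma integral_comp_wMap_right (hx : x ∈ Set.Icc (1 / 2 : ℝ) 1) :
    ∫ y in x..1, u (wMap s t e y) = ∫ y in 0..(1 - x), u (wBranch t e y) := by
  have hcongr : Set.EqOn (fun y => u (wMap s t e y)) (fun y => u (wBranch t e (1 - y)))
      (Set.Ioo x 1) := fun y hy => by
    simp only [wMap, if_neg (hx.1.trans hy.1.le).not_gt]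
  rw [intervalIntegral.integral_congr_Ioo_of_le hx.2 hcongr,
    intervalIntegral.integral_comp_sub_left (fun y => u (wBranch t e y)), sub_self]

lemma hasHalfPrimitiveBound_comp_wMap (hs : IsExpandingBranch θ s e) (ht : IsExpandingBranch θ t e)
    (hu : IsTestFunction K τ u) : HasHalfPrimitiveBound (θ * τ) fun x => u (wMap s t e x) where
  left x hx := by
    rw [integral_comp_wMap_left hx]
    exact hs.abs_integral_comp_wBranch_le hu hx
  right x hx := by
    rw [integral_comp_wMap_right hx]
    exact ht.abs_integral_comp_wBranch_le hu ⟨by linarith [hx.2], by linarith [hx.1]⟩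

end WMap

section Bridge

lemma abs_add_mul_le_of_neg_add_div {P Q w z ρ : ℝ} (hP : |P| ≤ ρ) (hQ : |Q| ≤ ρ) (hw : 0 < w)
    (hz : z ∈ Set.Icc 0 w) : |P + -(P + Q) / w * z| ≤ ρ := by
  have hr : z / w ∈ Set.Icc (0 : ℝ) 1 := ⟨div_nonneg hz.1 hw.le, div_le_one_of_le₀ hz.2 hw.le⟩
  have hcomb : P + -(P + Q) / w * z = (1 - z / w) * P + z / w * -Q := by ring
  rw [hcomb]
  exact abs_le.2 (convex_Icc (-ρ) ρ (abs_le.1 hP) (abs_le.1 ((abs_neg Q).trans_le hQ))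
    (sub_nonneg.2 hr.2) hr.1 (sub_add_cancel 1 _))

lemma HasHalfPrimitiveBound.isTestFunction_of_bridge {K ρ x₀ : ℝ} {u v : ℝ → ℝ}
    (hvρ : HasHalfPrimitiveBound ρ v) (hu : Measurable u) (huK : ∀ x, |u x| ≤ K)
    (hx₀ : x₀ ∈ Set.Ico (0 : ℝ) (1 / 2)) (huv : (Set.Ico x₀ (1 / 2))ᶜ.EqOn u v)
    (hbridge : ∀ x ∈ Set.Ico x₀ (1 / 2),
      u x = -((∫ y in 0..x₀, v y) + ∫ y in (1 / 2 : ℝ)..1, v y) / (1 / 2 - x₀)) :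
    IsTestFunction K ρ u := by
  set P : ℝ := ∫ y in 0..x₀, v y
  set Q : ℝ := ∫ y in (1 / 2 : ℝ)..1, v y
  have hw : 0 < 1 / 2 - x₀ := sub_pos.2 hx₀.2
  have hint := intervalIntegrable_of_forall_abs_le hu huK
  have hleft : ∀ x ∈ Set.Icc 0 x₀, ∫ y in 0..x, u y = ∫ y in 0..x, v y := fun x hx =>
    intervalIntegral.integral_congr_Ioo_of_le hx.1 fun y hy =>
      huv fun hyI => (hy.2.trans_le hx.2).not_ge hyI.1
  have hmiddle : ∀ x ∈ Set.Icc x₀ (1 / 2),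
      ∫ y in 0..x, u y = P + -(P + Q) / (1 / 2 - x₀) * (x - x₀) := fun x hx => by
    rw [← intervalIntegral.integral_add_adjacent_intervals (hint 0 x₀) (hint _ _),
      hleft x₀ ⟨hx₀.1, le_rfl⟩, intervalIntegral.integral_congr_Ioo_of_le hx.1
        fun y hy => hbridge y ⟨hy.1.le, hy.2.trans_le hx.2⟩,
      intervalIntegral.integral_const, smul_eq_mul, mul_comm (x - x₀)]
  have hright : ∀ x ∈ Set.Icc (1 / 2) 1, ∫ y in x..1, u y = ∫ y in x..1, v y := fun x hx =>
    intervalIntegral.integral_congr_Ioo_of_le hx.2 fun y hy =>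
      huv fun hyI => (hx.1.trans hy.1.le).not_gt hyI.2
  have hzero : ∫ y in (0 : ℝ)..1, u y = 0 := by
    rw [← intervalIntegral.integral_add_adjacent_intervals (hint 0 (1 / 2)) (hint _ _),
      hmiddle _ ⟨hx₀.2.le, le_rfl⟩, hright _ ⟨le_rfl, by norm_num⟩, div_mul_cancel₀ _ hw.ne']
    ring
  refine ⟨hu, huK, fun x hx => ?_, hzero⟩
  rcases le_total x x₀ with hxx₀ | hx₀x
  · rw [hleft x ⟨hx.1, hxx₀⟩]
    exact hvρ.left x ⟨hx.1, hxx₀.trans hx₀.2.le⟩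
  rcases le_total x (1 / 2) with hxhalf | hhalfx
  · rw [hmiddle x ⟨hx₀x, hxhalf⟩]
    exact abs_add_mul_le_of_neg_add_div (hvρ.left _ ⟨hx₀.1, hx₀.2.le⟩)
      (hvρ.right _ ⟨le_rfl, by norm_num⟩) hw ⟨sub_nonneg.2 hx₀x, sub_le_sub_right hxhalf _⟩
  · rw [← intervalIntegral.integral_add_adjacent_intervals (hint 0 x) (hint x 1),
      hright x ⟨hhalfx, hx.2⟩, ← eq_neg_iff_add_eq_zero] at hzero
    rw [hzero, abs_neg]
    exact hvρ.right x ⟨hhalfx, hx.2⟩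

lemma HasHalfPrimitiveBound.exists_isTestFunction_eqOn_compl {K ρ : ℝ} {v : ℝ → ℝ}
    (hvρ : HasHalfPrimitiveBound ρ v) (hv : Measurable v) (hvK : ∀ x, |v x| ≤ K) (hρ : 0 < ρ)
    (hρK : 4 * ρ ≤ K) :
    ∃ u, IsTestFunction K ρ u ∧ (Set.Ico (1 / 2 - 2 * ρ / K) (1 / 2))ᶜ.EqOn u v := by
  classical
  have hK : 0 < K := by linarith
  set x₀ : ℝ := 1 / 2 - 2 * ρ / K
  have hw : 1 / 2 - x₀ = 2 * ρ / K := sub_sub_cancel _ _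
  have hw_pos : 0 < 2 * ρ / K := by positivity
  have hx₀ : x₀ ∈ Set.Ico (0 : ℝ) (1 / 2) := by
    refine ⟨sub_nonneg.2 ?_, sub_lt_self _ hw_pos⟩
    rw [div_le_iff₀ hK]
    linarith
  set k : ℝ := -((∫ y in 0..x₀, v y) + ∫ y in (1 / 2 : ℝ)..1, v y) / (1 / 2 - x₀) with hk_def
  have hkK : |k| ≤ K := by
    rw [hk_def, abs_div, abs_neg, hw, abs_of_pos hw_pos, div_le_iff₀ hw_pos,
      mul_div_cancel₀ _ hK.ne', two_mul]
    exact (abs_add_le _ _).trans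
      (add_le_add (hvρ.left _ ⟨hx₀.1, hx₀.2.le⟩) (hvρ.right _ ⟨le_rfl, by norm_num⟩))
  have huK : ∀ x, |(Set.Ico x₀ (1 / 2)).piecewise (fun _ => k) v x| ≤ K := fun x => by
    by_cases hx : x ∈ Set.Ico x₀ (1 / 2)
    · rwa [Set.piecewise_eq_of_mem _ _ _ hx]
    · rw [Set.piecewise_eq_of_notMem _ _ _ hx]
      exact hvK x
  exact ⟨_, hvρ.isTestFunction_of_bridge
    (Measurable.piecewise measurableSet_Ico measurable_const hv) huK hx₀
    (Set.piecewise_eqOn_compl _ _ _) fun x hx => Set.piecewise_eq_of_mem _ _ _ hx,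
    Set.piecewise_eqOn_compl _ _ _⟩

end Bridge

/-- Lebesgue measure on the unit interval. -/
noncomputable abbrev unitVolume : Measure ℝ := volume.restrict (Set.Icc 0 1)

/-- `μ` is an invariant probability measure of `wMap s t e` whose density on `[0, 1]` is bounded
by `M`, and `θ` is a contraction factor valid for both halves of the map. -/
structure IsBoundedWInvariant (θ s t e : ℝ) (M : ℝ≥0) (μ : Measure ℝ) : Prop where
  left : IsExpandingBranch θ s e
  right : IsExpandingBranch θ t e
  isProbabilityMeasure : IsProbabilityMeasure μ
  measurePreserving : MeasurePreserving (wMap s t e) μ μ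
  le_smul : μ ≤ M • unitVolume

/-- The constant `C` in the variation bound `|∫ u ∂μ| ≤ C * τ` for test functions. -/
noncomputable def variationConst (θ : ℝ) (M : ℝ≥0) : ℝ := (4 + 4 * M) / (1 - θ)

lemma variationConst_pos {θ : ℝ} {M : ℝ≥0} (hθ : θ < 1) : 0 < variationConst θ M :=
  div_pos (by positivity) (sub_pos.2 hθ)

lemma variationConst_mul_one_sub {θ : ℝ} {M : ℝ≥0} (hθ : θ < 1) :
    variationConst θ M * (1 - θ) = 4 + 4 * M :=
  div_mul_cancel₀ _ (sub_pos.2 hθ).ne'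

lemma measureReal_Ico_le_of_le_smul {μ : Measure ℝ} {M : ℝ≥0} (hμ : μ ≤ M • unitVolume) {a b : ℝ}
    (hab : a ≤ b) : μ.real (Set.Ico a b) ≤ M * (b - a) := by
  have hle : μ (Set.Ico a b) ≤ ENNReal.ofReal (M * (b - a)) := calc
    μ (Set.Ico a b) ≤ (M • unitVolume) (Set.Ico a b) := hμ _
    _ ≤ M * volume (Set.Ico a b) := mul_le_mul_right (Measure.restrict_apply_le _ _) _
    _ = ENNReal.ofReal (M * (b - a)) := by
      rw [Real.volume_Ico, ENNReal.ofReal_mul M.coe_nonneg, ENNReal.ofReal_coe_nnreal]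
  exact ENNReal.toReal_le_of_le_ofReal (mul_nonneg M.coe_nonneg (sub_nonneg.2 hab)) hle

namespace IsBoundedWInvariant

variable {θ s t e K τ : ℝ} {M : ℝ≥0} {μ : Measure ℝ} {u : ℝ → ℝ}

lemma absolutelyContinuous (h : IsBoundedWInvariant θ s t e M μ) : μ ≪ unitVolume :=
  Measure.absolutelyContinuous_of_le_smul h.le_smul

lemma integral_comp (h : IsBoundedWInvariant θ s t e M μ) (hu : Measurable u) :
    ∫ x, u (wMap s t e x) ∂μ = ∫ x, u x ∂μ := by
  conv_rhs => rw [← h.measurePreserving.map_eq]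
  exact (integral_map measurable_wMap.aemeasurable hu.aestronglyMeasurable).symm

lemma exists_isTestFunction_abs_integral_sub_le (h : IsBoundedWInvariant θ s t e M μ)
    (hu : IsTestFunction K τ u) (hτ : 0 < τ) (hτK : 4 * (θ * τ) ≤ K) :
    ∃ u', IsTestFunction K (θ * τ) u' ∧ |∫ x, u x ∂μ - ∫ x, u' x ∂μ| ≤ 4 * M * (θ * τ) := by
  have := h.isProbabilityMeasure
  have hθτ : 0 < θ * τ := mul_pos (by linarith [h.left.half_le]) hτ
  have hv : Measurable fun x => u (wMap s t e x) := hu.measurable.comp measurable_wMap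
  obtain ⟨u', hu', heq⟩ :=
    (hasHalfPrimitiveBound_comp_wMap h.left h.right hu).exists_isTestFunction_eqOn_compl hv
      (fun x => hu.abs_le _) hθτ hτK
  have hK : 0 < K := by linarith
  refine ⟨u', hu', ?_⟩
  rw [← h.integral_comp hu.measurable]
  calc |∫ x, u (wMap s t e x) ∂μ - ∫ x, u' x ∂μ|
      ≤ 2 * K * μ.real (Set.Ico (1 / 2 - 2 * (θ * τ) / K) (1 / 2)) :=
        abs_integral_sub_le_of_eqOn_compl hv hu'.measurable (fun x => hu.abs_le _) hu'.abs_le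
          heq.symm
    _ ≤ 2 * K * (M * (1 / 2 - (1 / 2 - 2 * (θ * τ) / K))) := by
        gcongr
        exact measureReal_Ico_le_of_le_smul h.le_smul (sub_le_self _ (by positivity))
    _ = 4 * M * (θ * τ) := by
        field_simp
        ring

-- As long as `4θτ ≤ K`, passing to the bridged test function shrinks `τ` by `θ` at the cost of
-- `4Mθτ`. These costs sum to a geometric series, and the remaining term is negligible by
-- absolute continuity.
lemma abs_integral_le (h : IsBoundedWInvariant θ s t e M μ) (hu : IsTestFunction K τ u)
    (hτ : 0 < τ) : |∫ x, u x ∂μ| ≤ variationConst θ M * τ := by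
  have := h.isProbabilityMeasure
  have hC := variationConst_mul_one_sub (M := M) h.left.lt_one
  have hC0 := variationConst_pos (M := M) h.left.lt_one
  refine le_of_forall_pos_le_add fun ε hε => ?_
  obtain ⟨δ, hδ, hsmall⟩ :=
    exists_forall_abs_integral_le_of_absolutelyContinuous zero_le_one h.absolutelyContinuous
      (K := K) hε
  obtain ⟨n, hn⟩ : ∃ n : ℕ, θ ^ n < δ / τ := exists_pow_lt_of_lt_one (by positivity) h.left.lt_one
  replace hn : θ ^ n * τ ≤ δ := (lt_div_iff₀ hτ).1 hn |>.le
  induction n generalizing τ u with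
  | zero =>
    have := hsmall u hu.measurable hu.abs_le fun x hx =>
      (hu.abs_integral_le x hx).trans (by simpa using hn)
    linarith [mul_pos hC0 hτ]
  | succ n ih =>
    have hθ : 0 < θ := by linarith [h.left.half_le]
    rcases le_or_gt (4 * (θ * τ)) K with hτK | hKτ
    · obtain ⟨u', hu', hsub⟩ := h.exists_isTestFunction_abs_integral_sub_le hu hτ hτK
      have hu'_le := ih hu' (mul_pos hθ hτ) (by rwa [← mul_assoc, ← pow_succ])
      have hcost : 4 * M * (θ * τ) ≤ variationConst θ M * (1 - θ) * τ := by
        rw [hC]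
        nlinarith [mul_le_mul_of_nonneg_right h.left.lt_one.le hτ.le, M.coe_nonneg]
      linarith [abs_sub_abs_le_abs_sub (∫ x, u x ∂μ) (∫ x, u' x ∂μ)]
    · have hC4 : 4 ≤ variationConst θ M := by nlinarith [M.coe_nonneg]
      calc |∫ x, u x ∂μ| ≤ 4 * (θ * τ) := (abs_integral_le_of_forall_abs_le hu.abs_le).trans hKτ.le
        _ ≤ 4 * τ := by nlinarith [h.left.lt_one]
        _ ≤ variationConst θ M * τ + ε := by nlinarith

end IsBoundedWInvariant

/-- The function equal to `A` to the left of `1/2` and to `B` from `1/2` on. -/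
noncomputable def halfStep (A B x : ℝ) : ℝ := if x < 1 / 2 then A else B

/-- The conditional expectation of `v` on the partition of `[0, 1]` into its two halves. -/
noncomputable def halfMean (v : ℝ → ℝ) : ℝ → ℝ :=
  halfStep (2 * ∫ y in (0 : ℝ)..1 / 2, v y) (2 * ∫ y in (1 / 2 : ℝ)..1, v y)

section HalfMean

variable {A B K c ρ η x : ℝ} {v : ℝ → ℝ}

lemma halfStep_of_lt (hx : x < 1 / 2) : halfStep A B x = A := if_pos hx

lemma halfStep_of_ge (hx : 1 / 2 ≤ x) : halfStep A B x = B := if_neg hx.not_gt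

@[fun_prop]
lemma measurable_halfStep : Measurable (halfStep A B) :=
  Measurable.ite measurableSet_Iio measurable_const measurable_const

lemma abs_halfStep_le (hA : |A| ≤ c) (hB : |B| ≤ c) (x : ℝ) : |halfStep A B x| ≤ c := by
  unfold halfStep
  split_ifs <;> assumption

lemma integrable_halfStep {μ : Measure ℝ} [IsFiniteMeasure μ] : Integrable (halfStep A B) μ :=
  integrable_of_forall_abs_le measurable_halfStep
    (abs_halfStep_le (le_max_left _ _) (le_max_right _ _))

lemma integrable_halfMean {μ : Measure ℝ} [IsFiniteMeasure μ] : Integrable (halfMean v) μ :=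
  integrable_halfStep

lemma integral_mul_halfStep_left (hx : x ∈ Set.Icc (0 : ℝ) (1 / 2)) :
    ∫ y in 0..x, v y * halfStep A B y = (∫ y in 0..x, v y) * A := by
  rw [← intervalIntegral.integral_mul_const]
  exact intervalIntegral.integral_congr_Ioo_of_le hx.1 fun y hy => by
    simp only [halfStep_of_lt (hy.2.trans_le hx.2)]

lemma integral_mul_halfStep_right (hx : x ∈ Set.Icc (1 / 2 : ℝ) 1) :
    ∫ y in x..1, v y * halfStep A B y = (∫ y in x..1, v y) * B := by
  rw [← intervalIntegral.integral_mul_const]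
  exact intervalIntegral.integral_congr_Ioo_of_le hx.2 fun y hy => by
    simp only [halfStep_of_ge (hx.1.trans hy.1.le)]

lemma integral_halfStep_left (hx : x ∈ Set.Icc (0 : ℝ) (1 / 2)) :
    ∫ y in 0..x, halfStep A B y = x * A := by
  simpa using integral_mul_halfStep_left (v := fun _ => 1) (A := A) (B := B) hx

lemma integral_halfStep_right (hx : x ∈ Set.Icc (1 / 2 : ℝ) 1) :
    ∫ y in x..1, halfStep A B y = (1 - x) * B := by
  simpa using integral_mul_halfStep_right (v := fun _ => 1) (A := A) (B := B) hx

lemma hasHalfPrimitiveBound_of_forall_abs_le (hvK : ∀ x, |v x| ≤ K) :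
    HasHalfPrimitiveBound (K / 2) v where
  left x hx := by
    have hK : 0 ≤ K := (abs_nonneg _).trans (hvK 0)
    refine (abs_intervalIntegral_le_of_forall_abs_le hvK 0 x).trans ?_
    rw [sub_zero, abs_of_nonneg hx.1]
    nlinarith [hx.2]
  right x hx := by
    have hK : 0 ≤ K := (abs_nonneg _).trans (hvK 0)
    refine (abs_intervalIntegral_le_of_forall_abs_le hvK x 1).trans ?_
    rw [abs_of_nonneg (sub_nonneg.2 hx.2)]
    nlinarith [hx.1]

lemma integral_sub_halfMean_left (hv : Measurable v) (hvK : ∀ x, |v x| ≤ K)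
    (hx : x ∈ Set.Icc (0 : ℝ) (1 / 2)) :
    ∫ y in 0..x, (v y - halfMean v y) =
      (∫ y in 0..x, v y) - x * (2 * ∫ y in (0 : ℝ)..1 / 2, v y) := by
  rw [halfMean, intervalIntegral.integral_sub (intervalIntegrable_of_forall_abs_le hv hvK _ _)
    ⟨integrable_halfStep, integrable_halfStep⟩, integral_halfStep_left hx]

lemma integral_sub_halfMean_right (hv : Measurable v) (hvK : ∀ x, |v x| ≤ K)
    (hx : x ∈ Set.Icc (1 / 2 : ℝ) 1) :
    ∫ y in x..1, (v y - halfMean v y) =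
      (∫ y in x..1, v y) - (1 - x) * (2 * ∫ y in (1 / 2 : ℝ)..1, v y) := by
  rw [halfMean, intervalIntegral.integral_sub (intervalIntegrable_of_forall_abs_le hv hvK _ _)
    ⟨integrable_halfStep, integrable_halfStep⟩, integral_halfStep_right hx]

lemma integral_half_sub_halfMean (hv : Measurable v) (hvK : ∀ x, |v x| ≤ K) :
    ∫ y in (0 : ℝ)..1 / 2, (v y - halfMean v y) = 0 := by
  rw [integral_sub_halfMean_left hv hvK ⟨by norm_num, le_rfl⟩]
  ring

lemma isTestFunction_sub_halfMean (hv : Measurable v) (hvK : ∀ x, |v x| ≤ K)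
    (hvρ : HasHalfPrimitiveBound ρ v) (hηl : |∫ y in (0 : ℝ)..1 / 2, v y| ≤ η)
    (hηr : |∫ y in (1 / 2 : ℝ)..1, v y| ≤ η) :
    IsTestFunction (K + 2 * η) (ρ + η) fun x => v x - halfMean v x := by
  have hscale : ∀ {I z : ℝ}, |I| ≤ η → z ∈ Set.Icc (0 : ℝ) (1 / 2) → |z * (2 * I)| ≤ η := by
    intro I z hI hz
    rw [← mul_assoc, abs_mul, abs_of_nonneg (by linarith [hz.1])]
    exact (mul_le_of_le_one_left (abs_nonneg _) (by linarith [hz.2])).trans hI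
  have hmeas : Measurable fun x => v x - halfMean v x := hv.sub measurable_halfStep
  have hbound : ∀ x, |v x - halfMean v x| ≤ K + 2 * η := fun x => by
    refine (abs_sub _ _).trans (add_le_add (hvK x) (abs_halfStep_le ?_ ?_ x)) <;>
      rw [abs_mul, abs_two] <;> linarith
  have hint := intervalIntegrable_of_forall_abs_le hmeas hbound
  have hzero : ∫ y in (0 : ℝ)..1, (v y - halfMean v y) = 0 := by
    rw [← intervalIntegral.integral_add_adjacent_intervals (hint 0 (1 / 2)) (hint _ _),
      integral_half_sub_halfMean hv hvK, integral_sub_halfMean_right hv hvK ⟨le_rfl, by norm_num⟩]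
    ring
  refine ⟨hmeas, hbound, fun x hx => ?_, hzero⟩
  rcases le_total x (1 / 2) with hxhalf | hhalfx
  · rw [integral_sub_halfMean_left hv hvK ⟨hx.1, hxhalf⟩]
    exact (abs_sub _ _).trans
      (add_le_add (hvρ.left x ⟨hx.1, hxhalf⟩) (hscale hηl ⟨hx.1, hxhalf⟩))
  · rw [← intervalIntegral.integral_add_adjacent_intervals (hint 0 x) (hint x 1),
      ← eq_neg_iff_add_eq_zero] at hzero
    rw [hzero, abs_neg, integral_sub_halfMean_right hv hvK ⟨hhalfx, hx.2⟩]
    exact (abs_sub _ _).trans (add_le_add (hvρ.right x ⟨hhalfx, hx.2⟩)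
      (hscale hηr ⟨sub_nonneg.2 hx.2, by linarith⟩))

end HalfMean

section Decay

variable {θ s t e K τ : ℝ} {M : ℝ≥0} {μ : Measure ℝ} {u v : ℝ → ℝ}

lemma IsTestFunction.mono {K' τ' : ℝ} (hu : IsTestFunction K τ u) (hK : K ≤ K') (hτ : τ ≤ τ') :
    IsTestFunction K' τ' u :=
  ⟨hu.measurable, fun x => (hu.abs_le x).trans hK, fun x hx => (hu.abs_integral_le x hx).trans hτ,
    hu.integral_eq_zero⟩

lemma integral_comp_wMap_left_half :
    ∫ y in (0 : ℝ)..1 / 2, u (wMap s t e y) = ∫ y in (0 : ℝ)..1 / 2, u (wBranch s e y) :=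
  integral_comp_wMap_left ⟨by norm_num, le_rfl⟩

lemma integral_comp_wMap_right_half :
    ∫ y in (1 / 2 : ℝ)..1, u (wMap s t e y) = ∫ y in (0 : ℝ)..1 / 2, u (wBranch t e y) := by
  rw [integral_comp_wMap_right ⟨le_rfl, by norm_num⟩, sub_half]

namespace IsBoundedWInvariant

lemma exists_isTestFunction_integral_half_eq_zero (h : IsBoundedWInvariant θ s t e M μ)
    (hu : IsTestFunction K τ u) (hhalf : ∫ y in (0 : ℝ)..1 / 2, u y = 0) :
    ∃ u', IsTestFunction (2 * K) (θ * τ + K * |e|) u' ∧ ∫ y in (0 : ℝ)..1 / 2, u' y = 0 ∧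
      |∫ x, u x ∂μ - ∫ x, u' x ∂μ| ≤ 2 * (K * |e|) := by
  have := h.isProbabilityMeasure
  set v : ℝ → ℝ := fun x => u (wMap s t e x)
  have hK : 0 ≤ K := (abs_nonneg _).trans (hu.abs_le 0)
  have hv : Measurable v := hu.measurable.comp measurable_wMap
  have hvK : ∀ x, |v x| ≤ K := fun x => hu.abs_le _
  have hleft : |∫ y in (0 : ℝ)..1 / 2, v y| ≤ K * |e| := by
    have := h.left.abs_integral_comp_wBranch_half_sub_le hu.measurable hu.abs_le hhalf
    rwa [hu.integral_eq_zero, mul_zero, sub_zero, ← integral_comp_wMap_left_half (t := t)] at this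
  have hright : |∫ y in (1 / 2 : ℝ)..1, v y| ≤ K * |e| := by
    have := h.right.abs_integral_comp_wBranch_half_sub_le hu.measurable hu.abs_le hhalf
    rwa [hu.integral_eq_zero, mul_zero, sub_zero, ← integral_comp_wMap_right_half (s := s)] at this
  have hmean : ∀ x, |halfMean v x| ≤ 2 * (K * |e|) := by
    refine abs_halfStep_le ?_ ?_ <;> rw [abs_mul, abs_two] <;> gcongr
  refine ⟨fun x => v x - halfMean v x,
    (isTestFunction_sub_halfMean hv hvK (hasHalfPrimitiveBound_comp_wMap h.left h.right hu)
      hleft hright).mono (by nlinarith [h.left.abs_le_half]) le_rfl,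
    integral_half_sub_halfMean hv hvK, ?_⟩
  rw [← h.integral_comp hu.measurable, integral_sub (integrable_of_forall_abs_le hv hvK)
    integrable_halfMean, sub_sub_cancel]
  exact abs_integral_le_of_forall_abs_le hmean

lemma abs_integral_le_of_integral_half_eq_zero (h : IsBoundedWInvariant θ s t e M μ)
    (hu : IsTestFunction K τ u) (hτ : 0 < τ) (hhalf : ∫ y in (0 : ℝ)..1 / 2, u y = 0) (n : ℕ) :
    |∫ x, u x ∂μ| ≤ variationConst θ M * θ ^ n * τ +
      (2 + variationConst θ M) * (2 ^ n - 1) * (K * |e|) := by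
  have hC := variationConst_pos (M := M) h.left.lt_one
  set C := variationConst θ M
  induction n generalizing K τ u with
  | zero => simpa using h.abs_integral_le hu hτ
  | succ n ih =>
    have hθ : 0 < θ := by linarith [h.left.half_le]
    have hK : 0 ≤ K := (abs_nonneg _).trans (hu.abs_le 0)
    obtain ⟨u', hu', hhalf', hsub⟩ := h.exists_isTestFunction_integral_half_eq_zero hu hhalf
    have hdecay : C * θ ^ n * (K * |e|) ≤ C * (K * |e|) := by
      gcongr
      exact mul_le_of_le_one_right hC.le (pow_le_one₀ hθ.le h.left.lt_one.le)
    calc |∫ x, u x ∂μ| ≤ |∫ x, u' x ∂μ| + 2 * (K * |e|) := by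
          linarith [abs_sub_abs_le_abs_sub (∫ x, u x ∂μ) (∫ x, u' x ∂μ)]
      _ ≤ C * θ ^ n * (θ * τ + K * |e|) + (2 + C) * (2 ^ n - 1) * (2 * K * |e|) +
          2 * (K * |e|) := by
          gcongr
          exact ih hu' (by positivity) hhalf'
      _ ≤ C * θ ^ (n + 1) * τ + (2 + C) * (2 ^ (n + 1) - 1) * (K * |e|) := by
          rw [pow_succ, pow_succ]
          linarith

lemma abs_integral_sub_integral_halfMean_le (h : IsBoundedWInvariant θ s t e M μ)
    (hv : Measurable v) (hv1 : ∀ x, |v x| ≤ 1) (n : ℕ) :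
    |∫ x, v x ∂μ - ∫ x, halfMean v x ∂μ| ≤ variationConst θ M * θ ^ n +
      (2 + variationConst θ M) * (2 ^ n - 1) * (2 * |e|) := by
  have := h.isProbabilityMeasure
  have hhalf := hasHalfPrimitiveBound_of_forall_abs_le hv1
  have htest : IsTestFunction 2 1 fun x => v x - halfMean v x :=
    (isTestFunction_sub_halfMean hv hv1 hhalf (hhalf.left _ ⟨by norm_num, le_rfl⟩)
      (hhalf.right _ ⟨le_rfl, by norm_num⟩)).mono (by norm_num) (by norm_num)
  have hdecay := h.abs_integral_le_of_integral_half_eq_zero htest one_pos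
    (integral_half_sub_halfMean hv hv1) n
  rwa [mul_one, integral_sub (integrable_of_forall_abs_le hv hv1) integrable_halfMean] at hdecay

end IsBoundedWInvariant

/-- `μ` is within `ε` of being a multiple of Lebesgue measure on each half of `[0, 1]`, as tested
against measurable functions bounded by `1`. -/
def IsApproxUniformOnHalves (ε : ℝ) (μ : Measure ℝ) : Prop :=
  ∀ v : ℝ → ℝ, Measurable v → (∀ x, |v x| ≤ 1) → |∫ x, v x ∂μ - ∫ x, halfMean v x ∂μ| ≤ ε

lemma exists_forall_isApproxUniformOnHalves (hθ : θ < 1) (M : ℝ≥0) {ε : ℝ} (hε : 0 < ε) :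
    ∃ κ > 0, ∀ {s t e : ℝ} {μ : Measure ℝ},
      IsBoundedWInvariant θ s t e M μ → |e| ≤ κ → IsApproxUniformOnHalves ε μ := by
  set C := variationConst θ M
  have hC : 0 < C := variationConst_pos hθ
  obtain ⟨n, hn⟩ := exists_pow_lt_of_lt_one (show 0 < ε / (2 * C) by positivity) hθ
  set D : ℝ := (2 + C) * (2 ^ n - 1) * 2
  have hD : 0 ≤ D := by
    have : (1 : ℝ) ≤ 2 ^ n := one_le_pow₀ one_le_two
    have : (0 : ℝ) ≤ 2 ^ n - 1 := sub_nonneg.2 this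
    positivity
  refine ⟨ε / (2 * (D + 1)), by positivity, fun h he v hv hv1 => ?_⟩
  calc _ ≤ C * θ ^ n + (2 + C) * (2 ^ n - 1) * (2 * |_|) :=
        h.abs_integral_sub_integral_halfMean_le hv hv1 n
    _ = C * θ ^ n + D * |_| := by ring
    _ ≤ C * (ε / (2 * C)) + (D + 1) * (ε / (2 * (D + 1))) := by
        gcongr
        linarith
    _ = ε := by
        field_simp
        ring

end Decay

section Mass

variable {θ s t e ε A B : ℝ} {M : ℝ≥0} {μ : Measure ℝ}

lemma integral_halfStep [IsProbabilityMeasure μ] :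
    ∫ x, halfStep A B x ∂μ = A * (1 - μ.real (Set.Ici (1 / 2))) + B * μ.real (Set.Ici (1 / 2)) := by
  have hsum : halfStep A B = fun x => A + (Set.Ici (1 / 2)).indicator (fun _ => B - A) x := by
    ext x
    rcases lt_or_ge x (1 / 2) with hx | hx
    · rw [halfStep_of_lt hx, Set.indicator_of_notMem (Set.notMem_Ici.2 hx), add_zero]
    · rw [halfStep_of_ge hx, Set.indicator_of_mem (Set.mem_Ici.2 hx), add_sub_cancel]
  rw [hsum, integral_add (integrable_const A)
    ((integrable_const (B - A)).indicator measurableSet_Ici), integral_const,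
    integral_indicator_const _ measurableSet_Ici, probReal_univ, one_smul, smul_eq_mul]
  ring

-- The mass of the right half solves, up to a small error, the stationarity equation of the
-- two-state chain in which the left and right halves send the fractions `outerWidth s e` and
-- `outerWidth t e` of their points to the right half.
lemma IsBoundedWInvariant.abs_measureReal_Ici_sub_le (h : IsBoundedWInvariant θ s t e M μ)
    (hμ : IsApproxUniformOnHalves ε μ) :
    |μ.real (Set.Ici (1 / 2)) - (outerWidth s e * (1 - μ.real (Set.Ici (1 / 2))) +
      outerWidth t e * μ.real (Set.Ici (1 / 2)))| ≤ ε + 2 * |e| := by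
  have := h.isProbabilityMeasure
  set m := μ.real (Set.Ici (1 / 2)) with hm_def
  have hm0 : 0 ≤ m := measureReal_nonneg
  have hm1 : m ≤ 1 := measureReal_le_one
  have hbound : ∀ x, |halfStep 0 1 x| ≤ 1 := abs_halfStep_le (by norm_num) (by norm_num)
  have hhalf : ∫ y in (0 : ℝ)..1 / 2, halfStep 0 1 y = 0 := by
    rw [integral_halfStep_left ⟨by norm_num, le_rfl⟩, mul_zero]
  have hone : ∫ y in (0 : ℝ)..1, halfStep 0 1 y = 1 / 2 := by
    have hint := intervalIntegrable_of_forall_abs_le measurable_halfStep hbound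
    rw [← intervalIntegral.integral_add_adjacent_intervals (hint 0 (1 / 2)) (hint _ _), hhalf,
      integral_halfStep_right ⟨le_rfl, by norm_num⟩]
    norm_num
  have hleft := h.left.abs_integral_comp_wBranch_half_sub_le measurable_halfStep hbound hhalf
  have hright := h.right.abs_integral_comp_wBranch_half_sub_le measurable_halfStep hbound hhalf
  have hmix := hμ (fun x => halfStep 0 1 (wMap s t e x)) (by fun_prop) fun x => hbound _
  rw [h.integral_comp measurable_halfStep, halfMean, integral_halfStep, integral_halfStep,
    integral_comp_wMap_left_half, integral_comp_wMap_right_half, ← hm_def] at hmix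
  rw [hone, one_mul] at hleft hright
  simp only [abs_le] at hmix hleft hright ⊢
  constructor <;> nlinarith

lemma integral_mul_halfStep_unitVolume {v : ℝ → ℝ} {K : ℝ} (hv : Measurable v)
    (hvK : ∀ x, |v x| ≤ K) :
    ∫ x, v x * halfStep A B x ∂unitVolume =
      (∫ y in (0 : ℝ)..1 / 2, v y) * A + (∫ y in (1 / 2 : ℝ)..1, v y) * B := by
  have hint : ∀ a b, IntervalIntegrable (fun x => v x * halfStep A B x) volume a b := fun a b =>
    ⟨integrable_halfStep.bdd_mul hv.aestronglyMeasurable (.of_forall hvK),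
      integrable_halfStep.bdd_mul hv.aestronglyMeasurable (.of_forall hvK)⟩
  rw [integral_Icc_eq_integral_Ioc, ← intervalIntegral.integral_of_le zero_le_one,
    ← intervalIntegral.integral_add_adjacent_intervals (hint 0 (1 / 2)) (hint _ _),
    integral_mul_halfStep_left ⟨by norm_num, le_rfl⟩,
    integral_mul_halfStep_right ⟨le_rfl, by norm_num⟩]

lemma IsApproxUniformOnHalves.integral_abs_rnDeriv_sub_halfStep_le [IsProbabilityMeasure μ]
    (hμ : IsApproxUniformOnHalves ε μ) (hac : μ ≪ unitVolume) (hAB : A + B = 2) :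
    ∫ x, |(μ.rnDeriv unitVolume x).toReal - halfStep A B x| ∂unitVolume ≤
      ε + 2 * |μ.real (Set.Ici (1 / 2)) - B / 2| := by
  obtain ⟨σ, hσ, hσ1, habs⟩ := exists_measurable_abs_eq_mul
    ((μ.measurable_rnDeriv unitVolume).ennreal_toReal.sub (measurable_halfStep (A := A) (B := B)))
  set l : ℝ := ∫ y in (0 : ℝ)..1 / 2, σ y
  set r : ℝ := ∫ y in (1 / 2 : ℝ)..1, σ y
  set m := μ.real (Set.Ici (1 / 2))
  have hhalf := hasHalfPrimitiveBound_of_forall_abs_le hσ1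
  have hlr : |r - l| ≤ 1 := by
    linarith [abs_sub r l, hhalf.left (1 / 2) ⟨by norm_num, le_rfl⟩,
      hhalf.right (1 / 2) ⟨le_rfl, by norm_num⟩]
  have hσμ : ∫ x, σ x ∂μ ≤ ε + (2 * l * (1 - m) + 2 * r * m) := by
    have hmix := (abs_le.1 (hμ σ hσ hσ1)).2
    rw [halfMean, integral_halfStep] at hmix
    linarith
  calc ∫ x, |(μ.rnDeriv unitVolume x).toReal - halfStep A B x| ∂unitVolume
      = ∫ x, ((μ.rnDeriv unitVolume x).toReal * σ x - σ x * halfStep A B x) ∂unitVolume :=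
        integral_congr_ae (.of_forall fun x => (habs x).trans (by simp only [Pi.sub_apply]; ring))
    _ = ∫ x, σ x ∂μ - (l * A + r * B) := by
        rw [integral_sub (Measure.integrable_toReal_rnDeriv.mul_bdd hσ.aestronglyMeasurable
            (.of_forall hσ1))
          (integrable_halfStep.bdd_mul hσ.aestronglyMeasurable (.of_forall hσ1)),
          integral_mul_halfStep_unitVolume hσ hσ1, integral_toReal_rnDeriv_mul hac]
    _ ≤ ε + 2 * ((r - l) * (m - B / 2)) := by
        rw [← eq_sub_iff_add_eq] at hAB
        subst hAB
        linarith
    _ ≤ ε + 2 * |m - B / 2| := by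
        gcongr
        refine (le_abs_self _).trans ?_
        rw [abs_mul]
        exact mul_le_of_le_one_left (abs_nonneg _) hlr

end Mass

/-- `h` is the density on `[0, 1]` of an invariant probability measure of `T`. It is not assumed to
be measurable: `withDensity` only sees its largest measurable minorant. -/
structure IsInvariantDensity (T h : ℝ → ℝ) : Prop where
  nonneg : ∀ᵐ x ∂unitVolume, 0 ≤ h x
  isProbabilityMeasure :
    IsProbabilityMeasure (unitVolume.withDensity fun x => ENNReal.ofReal (h x))
  measurePreserving : MeasurePreserving T (unitVolume.withDensity fun x => ENNReal.ofReal (h x))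
    (unitVolume.withDensity fun x => ENNReal.ofReal (h x))

lemma isInvariantDensity_of_forall_measure_preimage {T h : ℝ → ℝ} {μ : Measure ℝ}
    (hT : Measurable T) (hprob : IsProbabilityMeasure μ) (hnonneg : ∀ᵐ x ∂unitVolume, 0 ≤ h x)
    (hμ : μ = unitVolume.withDensity fun x => ENNReal.ofReal (h x))
    (hinv : ∀ A, MeasurableSet A → μ (T ⁻¹' A) = μ A) : IsInvariantDensity T h := by
  subst hμ
  exact ⟨hnonneg, hprob, hT, Measure.ext fun A hA => (Measure.map_apply hT hA).trans (hinv A hA)⟩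

section Convergence

variable {θ s t e ε s₁ s₂ : ℝ} {M : ℝ≥0} {h : ℝ → ℝ}

lemma IsInvariantDensity.isBoundedWInvariant (hh : IsInvariantDensity (wMap s t e) h)
    (hs : IsExpandingBranch θ s e) (ht : IsExpandingBranch θ t e)
    (hM : ∀ᵐ x ∂unitVolume, h x ≤ M) :
    IsBoundedWInvariant θ s t e M (unitVolume.withDensity fun x => ENNReal.ofReal (h x)) where
  left := hs
  right := ht
  isProbabilityMeasure := hh.isProbabilityMeasure
  measurePreserving := hh.measurePreserving
  le_smul := calc
    unitVolume.withDensity (fun x => ENNReal.ofReal (h x)) ≤ unitVolume.withDensity fun _ => M := by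
      refine withDensity_mono ?_
      filter_upwards [hM] with x hx
      exact (ENNReal.ofReal_le_ofReal hx).trans_eq ENNReal.ofReal_coe_nnreal
    _ = M • unitVolume := withDensity_const _

lemma abs_sub_div_le_of_abs_sub_le {m b c b₀ c₀ η : ℝ} (hm : m ∈ Set.Icc (0 : ℝ) 1) (hb₀ : 0 ≤ b₀)
    (hc₀ : c₀ ≤ 1 / 2) (hη : |m - (b * (1 - m) + c * m)| ≤ η) :
    |m - b₀ / (1 + b₀ - c₀)| ≤ 2 * (η + |b - b₀| + |c - c₀|) := by
  have hden : 1 / 2 ≤ 1 + b₀ - c₀ := by linarith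
  have hmul : (m - b₀ / (1 + b₀ - c₀)) * (1 + b₀ - c₀) =
      m - (b * (1 - m) + c * m) + (b - b₀) * (1 - m) + (c - c₀) * m := by
    rw [sub_mul, div_mul_cancel₀ _ (by linarith)]
    ring
  have hle : |m - b₀ / (1 + b₀ - c₀)| * (1 + b₀ - c₀) ≤ η + |b - b₀| + |c - c₀| := by
    rw [← abs_of_nonneg (show 0 ≤ 1 + b₀ - c₀ by linarith), ← abs_mul,
      abs_of_nonneg (show 0 ≤ 1 + b₀ - c₀ by linarith), hmul]
    refine (abs_add_three _ _ _).trans (add_le_add_three hη ?_ ?_) <;> rw [abs_mul]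
    · exact mul_le_of_le_one_right (abs_nonneg _)
        (abs_le.2 ⟨by linarith [hm.2], by linarith [hm.1]⟩)
    · exact mul_le_of_le_one_right (abs_nonneg _) (abs_le.2 ⟨by linarith [hm.1], hm.2⟩)
  nlinarith [mul_le_mul_of_nonneg_left hden (abs_nonneg (m - b₀ / (1 + b₀ - c₀)))]

lemma h0_eq_halfStep : h0 s₁ s₂ = halfStep (2 * s₁ * (s₂ + 1) / (2 * s₁ * s₂ + s₁ - s₂))
    (2 * s₂ * (s₁ - 1) / (2 * s₁ * s₂ + s₁ - s₂)) := rfl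

lemma h0_right_div_two_eq (hs₁ : s₁ ≠ 0) (hs₂ : s₂ ≠ 0) :
    2 * s₂ * (s₁ - 1) / (2 * s₁ * s₂ + s₁ - s₂) / 2 =
      outerWidth s₁ 0 / (1 + outerWidth s₁ 0 - outerWidth s₂ 0) := by
  have hden : 1 + outerWidth s₁ 0 - outerWidth s₂ 0 =
      (2 * s₁ * s₂ + s₁ - s₂) / (2 * s₁ * s₂) := by
    rw [outerWidth_zero hs₁, outerWidth_zero hs₂]
    field_simp
    ring
  rw [hden, outerWidth_zero hs₁]
  field_simp

lemma IsInvariantDensity.integral_abs_sub_h0_le (hh : IsInvariantDensity (wMap s t e) h)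
    (hs : IsExpandingBranch θ s e) (ht : IsExpandingBranch θ t e)
    (hM : ∀ᵐ x ∂unitVolume, h x ≤ M)
    (hε : IsApproxUniformOnHalves ε (unitVolume.withDensity fun x => ENNReal.ofReal (h x)))
    (hs₁ : 1 < s₁) (hs₂ : 1 < s₂) :
    ∫ x, |h x - h0 s₁ s₂ x| ∂unitVolume ≤ 5 * ε + 4 * (2 * |e| +
      |outerWidth s e - outerWidth s₁ 0| + |outerWidth t e - outerWidth s₂ 0|) := by
  have := hh.isProbabilityMeasure
  have hW := hh.isBoundedWInvariant hs ht hM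
  set μ := unitVolume.withDensity fun x => ENNReal.ofReal (h x) with hμ_def
  have hden : 0 < 2 * s₁ * s₂ + s₁ - s₂ := by nlinarith
  have hmass := abs_sub_div_le_of_abs_sub_le (b₀ := outerWidth s₁ 0) (c₀ := outerWidth s₂ 0)
    ⟨measureReal_nonneg, measureReal_le_one⟩
    (by rw [outerWidth_zero (by positivity)]; exact div_nonneg (by linarith) (by linarith))
    (by rw [outerWidth_zero (by positivity), div_le_iff₀ (by linarith)]; linarith)
    (hW.abs_measureReal_Ici_sub_le hε)
  rw [h0_eq_halfStep]
  calc ∫ x, |h x - halfStep _ _ x| ∂unitVolume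
      ≤ ∫ x, |(μ.rnDeriv unitVolume x).toReal - halfStep _ _ x| ∂unitVolume :=
        integral_abs_sub_le_integral_abs_rnDeriv_sub hh.nonneg hμ_def measurable_halfStep
    _ ≤ ε + 2 * |μ.real (Set.Ici (1 / 2)) -
          2 * s₂ * (s₁ - 1) / (2 * s₁ * s₂ + s₁ - s₂) / 2| := by
        refine hε.integral_abs_rnDeriv_sub_halfStep_le hW.absolutelyContinuous ?_
        rw [← add_div, div_eq_iff hden.ne']
        ring
    _ ≤ _ := by
        rw [h0_right_div_two_eq (by positivity) (by positivity)]
        linarith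

end Convergence

section Limit

variable {ι : Type*} {l : Filter ι} {θ s₀ t₀ C : ℝ} {s t e : ι → ℝ} {h : ι → ℝ → ℝ}

lemma eventually_isExpandingBranch (hs : Tendsto s l (𝓝 s₀)) (he : Tendsto e l (𝓝 0))
    (hs₀ : 1 < s₀) (hθ_half : 1 / 2 ≤ θ) (hθ_one : θ < 1) (hs₀θ : s₀⁻¹ < θ) :
    ∀ᶠ i in l, IsExpandingBranch θ (s i) (e i) := by
  have hgap : ∀ᶠ i in l, 1 + 2 * e i < s i :=
    ((he.const_mul 2).const_add 1).eventually_lt hs (by simpa using hs₀)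
  have habs : ∀ᶠ i in l, |e i| < 1 / 2 := he.abs.eventually_lt_const (by norm_num)
  have hinv : ∀ᶠ i in l, (s i)⁻¹ < θ :=
    (hs.inv₀ (zero_lt_one.trans hs₀).ne').eventually_lt_const hs₀θ
  filter_upwards [hgap, habs, hinv] with i hgap_i habs_i hinv_i
  exact ⟨hθ_half, hθ_one, hinv_i.le, habs_i.le, hgap_i⟩

lemma tendsto_outerWidth (hs : Tendsto s l (𝓝 s₀)) (he : Tendsto e l (𝓝 0)) (hs₀ : s₀ ≠ 0) :
    Tendsto (fun i => outerWidth (s i) (e i)) l (𝓝 (outerWidth s₀ 0)) :=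
  ((he.const_add _).div hs hs₀).const_sub _

lemma exists_eventually_isExpandingBranch (hs₀ : 1 < s₀) (ht₀ : 1 < t₀) (hs : Tendsto s l (𝓝 s₀))
    (ht : Tendsto t l (𝓝 t₀)) (he : Tendsto e l (𝓝 0)) :
    ∃ θ < 1, ∀ᶠ i in l, IsExpandingBranch θ (s i) (e i) ∧ IsExpandingBranch θ (t i) (e i) := by
  obtain ⟨θ, hθ, hθ_one⟩ : ∃ θ, max (1 / 2) (max s₀⁻¹ t₀⁻¹) < θ ∧ θ < 1 :=
    exists_between (max_lt (by norm_num)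
      (max_lt (inv_lt_one_of_one_lt₀ hs₀) (inv_lt_one_of_one_lt₀ ht₀)))
  obtain ⟨hθ_half, hs₀θ, ht₀θ⟩ : 1 / 2 < θ ∧ s₀⁻¹ < θ ∧ t₀⁻¹ < θ := by
    simpa only [max_lt_iff] using hθ
  exact ⟨θ, hθ_one, (eventually_isExpandingBranch hs he hs₀ hθ_half.le hθ_one hs₀θ).and
    (eventually_isExpandingBranch ht he ht₀ hθ_half.le hθ_one ht₀θ)⟩

theorem tendsto_integral_abs_sub_h0 (hs₀ : 1 < s₀) (ht₀ : 1 < t₀) (hs : Tendsto s l (𝓝 s₀))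
    (ht : Tendsto t l (𝓝 t₀)) (he : Tendsto e l (𝓝 0))
    (hh : ∀ᶠ i in l, IsInvariantDensity (wMap (s i) (t i) (e i)) (h i))
    (hC : ∀ᶠ i in l, ∀ᵐ x ∂unitVolume, h i x ≤ C) :
    Tendsto (fun i => ∫ x, |h i x - h0 s₀ t₀ x| ∂unitVolume) l (𝓝 0) := by
  obtain ⟨θ, hθ, hbranch⟩ := exists_eventually_isExpandingBranch hs₀ ht₀ hs ht he
  have herror : Tendsto (fun i => 4 * (2 * |e i| + |outerWidth (s i) (e i) - outerWidth s₀ 0| +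
      |outerWidth (t i) (e i) - outerWidth t₀ 0|)) l (𝓝 0) := by
    have hs_width := ((tendsto_outerWidth hs he (by positivity)).sub_const (outerWidth s₀ 0)).abs
    have ht_width := ((tendsto_outerWidth ht he (by positivity)).sub_const (outerWidth t₀ 0)).abs
    simpa using (((he.abs.const_mul 2).add hs_width).add ht_width).const_mul 4
  refine Metric.tendsto_nhds.2 fun ε hε => ?_
  obtain ⟨κ, hκ, happrox⟩ :=
    exists_forall_isApproxUniformOnHalves hθ C.toNNReal (show 0 < ε / 10 by positivity)
  filter_upwards [hh, hC, hbranch, he.abs.eventually_lt_const (by rwa [abs_zero]),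
    herror.eventually_lt_const (half_pos hε)] with i hh_i hC_i ⟨hs_i, ht_i⟩ he_i herror_i
  have hC_nn : ∀ᵐ x ∂unitVolume, h i x ≤ C.toNNReal :=
    hC_i.mono fun x hx => hx.trans (Real.le_coe_toNNReal C)
  have happrox_i := happrox (hh_i.isBoundedWInvariant hs_i ht_i hC_nn) he_i.le
  have hbound := hh_i.integral_abs_sub_h0_le hs_i ht_i hC_nn happrox_i hs₀ ht₀
  rw [Real.dist_0_eq_abs, abs_of_nonneg (integral_nonneg fun x => abs_nonneg _)]
  linarith

end Limit

section Wmap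

variable {θ s₁ s₂ p q r a : ℝ}

lemma Wmap_eq_wMap (hs : IsExpandingBranch θ (s₁ + p * a) (r * a))
    (ht : IsExpandingBranch θ (s₂ + q * a) (r * a)) :
    Wmap s₁ s₂ p q r a = wMap (s₁ + p * a) (s₂ + q * a) (r * a) := by
  have hden₁ : s₁ - 1 + p * a - 2 * r * a = s₁ + p * a - 1 - 2 * (r * a) := by ring
  have hden₂ : s₂ - 1 + q * a - 2 * r * a = s₂ + q * a - 1 - 2 * (r * a) := by ring
  have hwidth₂ : 1 / 2 + (1 / 2 + r * a) / (s₂ + q * a) = 1 - outerWidth (s₂ + q * a) (r * a) := by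
    rw [outerWidth]
    ring
  ext x
  rw [Wmap, wMap, hden₁, hden₂, ← hs.inv_outerWidth, ← ht.inv_outerWidth, hwidth₂, ← outerWidth]
  rcases lt_or_ge x (1 / 2) with hx | hx
  · simp only [if_pos hx, wBranch, inv_mul_eq_div]
  · rw [if_neg (hs.outerWidth_le_half.trans hx).not_gt, if_neg hx.not_gt, if_neg hx.not_gt]
    rcases lt_or_ge x (1 - outerWidth (s₂ + q * a) (r * a)) with hinner | houter
    · rw [if_pos hinner, wBranch, if_neg (by linarith)]
      ring
    · rw [if_neg houter.not_gt, ht.wBranch_of_le (by linarith)]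
      ring

@[fun_prop]
lemma measurable_Wmap : Measurable (Wmap s₁ s₂ p q r a) :=
  .ite measurableSet_Iio (by fun_prop) <| .ite measurableSet_Iio (by fun_prop) <|
    .ite measurableSet_Iio (by fun_prop) (by fun_prop)

lemma tendsto_add_mul_of_le_nhds_zero {l : Filter ℝ} (hl : l ≤ 𝓝 0) (b k : ℝ) :
    Tendsto (fun a => b + k * a) l (𝓝 b) :=
  (Continuous.tendsto' (by fun_prop) 0 b (by ring)).mono_left hl

end Wmap

theorem Wmap_densities_tendsto_L1_general {s₁ s₂ p q r M : ℝ} {h : ℝ → ℝ → ℝ} {l : Filter ℝ}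
    (hs₁ : 1 < s₁) (hs₂ : 1 < s₂) (hl : l ≤ 𝓝 0)
    (hh : ∀ᶠ a in l, IsInvariantDensity (Wmap s₁ s₂ p q r a) (h a))
    (hM : ∀ᶠ a in l, ∀ᵐ x ∂unitVolume, h a x ≤ M) :
    Tendsto (fun a => ∫ x in Set.Icc (0 : ℝ) 1, |h a x - h0 s₁ s₂ x|) l (𝓝 0) := by
  have he : Tendsto (fun a => r * a) l (𝓝 0) := by
    simpa only [zero_add] using tendsto_add_mul_of_le_nhds_zero hl 0 r
  have hs := tendsto_add_mul_of_le_nhds_zero hl s₁ p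
  have ht := tendsto_add_mul_of_le_nhds_zero hl s₂ q
  obtain ⟨θ, -, hbranch⟩ := exists_eventually_isExpandingBranch hs₁ hs₂ hs ht he
  refine tendsto_integral_abs_sub_h0 hs₁ hs₂ hs ht he ?_ hM
  filter_upwards [hh, hbranch] with a hh_a ⟨hs_a, ht_a⟩
  rwa [← Wmap_eq_wMap hs_a ht_a]

/-- Lemma 6: if `1/s₁ + 1/s₂ ≤ 1` and the normalized invariant densities `h_a` of `W_a`
are uniformly bounded for small `a`, then `h_a → h_0` in `L¹([0,1], λ)` as `a → 0⁺`. -/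
theorem Wmap_densities_tendsto_L1
    (s₁ s₂ p q r : ℝ) (hs₁ : 1 < s₁) (hs₂ : 1 < s₂)
    (hp : 0 < p) (hq : 0 < q) (hr : 0 < r)
    (hsum : 1/s₁ + 1/s₂ ≤ 1)
    (a₁ : ℝ) (ha₁ : 0 < a₁) (μ : ℝ → Measure ℝ) (h : ℝ → ℝ → ℝ)
    (hμ : ∀ a, 0 < a → a < a₁ →
      Set.MapsTo (Wmap s₁ s₂ p q r a) (Set.Icc 0 1) (Set.Icc 0 1) ∧
      IsProbabilityMeasure (μ a) ∧
      (∀ᵐ x ∂(volume.restrict (Set.Icc (0:ℝ) 1)), 0 ≤ h a x) ∧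
      μ a = (volume.restrict (Set.Icc (0:ℝ) 1)).withDensity
              (fun x => ENNReal.ofReal (h a x)) ∧
      (∀ A : Set ℝ, MeasurableSet A → μ a (Wmap s₁ s₂ p q r a ⁻¹' A) = μ a A))
    (a₀ M : ℝ) (ha₀ : 0 < a₀) (hM : 0 < M)
    (hbdd : ∀ a, 0 < a → a < a₀ →
      ∀ᵐ x ∂(volume.restrict (Set.Icc (0:ℝ) 1)), h a x ≤ M) :
    Tendsto (fun a => ∫ x in Set.Icc (0:ℝ) 1, |h a x - h0 s₁ s₂ x|)
      (𝓝[>] (0:ℝ)) (𝓝 0) := by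
  have hdensity : ∀ᶠ a in 𝓝[>] 0, IsInvariantDensity (Wmap s₁ s₂ p q r a) (h a) := by
    filter_upwards [Ioo_mem_nhdsGT ha₁] with a ha
    obtain ⟨-, hprob, hnonneg, heq, hinv⟩ := hμ a ha.1 ha.2
    exact isInvariantDensity_of_forall_measure_preimage measurable_Wmap hprob hnonneg heq hinv
  have hbound : ∀ᶠ a in 𝓝[>] 0, ∀ᵐ x ∂unitVolume, h a x ≤ M := by
    filter_upwards [Ioo_mem_nhdsGT ha₀] with a ha using hbdd a ha.1 ha.2
  exact Wmap_densities_tendsto_L1_general hs₁ hs₂ nhdsWithin_le_nhds hdensity hbound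
end
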